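/- arXiv:1308.3090 — 5 statements merged into one kernel-verified Lean document; each statement's English description precedes it below -/
import Mathlib

section
/- Let X₁, X₂, … be i.i.d. real random variables with a Lebesgue density, mean 0 and variance 1, and let S̄_n := max_{1≤k≤n} (X₁+…+X_k). Then the total variation distance between the distribution of S̄_n/√n and the distribution of |Z| tends to 0 as n → ∞. -/
open MeasureTheory ProbabilityTheory Filter
open scoped ENNReal

/-- The law of `|Z|` for a standard normal `Z` (one-sided standard normal law). -/
noncomputable def halfNormal : Measure ℝ := Measure.map (fun y => |y|) (gaussianReal 0 1)

/-- The total variation distance between the laws of two (finite) measures on `ℝ`,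
as the supremum over Borel sets of the absolute difference of their values. -/
noncomputable def dTV (μ ν : Measure ℝ) : ℝ :=
  ⨆ A : {s : Set ℝ // MeasurableSet s}, |(μ A.1).toReal - (ν A.1).toReal|

/-- One-sided smoothness under a shift by `t`. -/
def Sh (ρ : Measure ℝ) (t D : ℝ) : Prop :=
  ∀ φ : ℝ → ℝ, Measurable φ → (∀ x, 0 ≤ φ x) → (∀ x, φ x ≤ 1) →
    ∫ y, φ y ∂ρ - ∫ y, φ (y + t) ∂ρ ≤ D

lemma integrable_of_unit {α : Type*} [MeasurableSpace α] (ρ : Measure α) [IsFiniteMeasure ρ]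
    {u : α → ℝ} (hu : Measurable u)
    (h0 : ∀ x, 0 ≤ u x) (h1 : ∀ x, u x ≤ 1) : Integrable u ρ :=
  Integrable.of_bound hu.aestronglyMeasurable 1
    (ae_of_all _ fun x => by rw [Real.norm_eq_abs, abs_of_nonneg (h0 x)]; exact h1 x)

lemma Sh.mono {ρ : Measure ℝ} {t D D' : ℝ} (h : Sh ρ t D) (hD : D ≤ D') : Sh ρ t D' :=
  fun φ a b c => (h φ a b c).trans hD

lemma Sh.le_one (ρ : Measure ℝ) [IsProbabilityMeasure ρ] (t : ℝ) : Sh ρ t 1 := by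
  intro φ hm h0 h1
  have a : ∫ y, φ y ∂ρ ≤ 1 := by
    have := integral_mono (integrable_of_unit ρ hm h0 h1) (integrable_const (1:ℝ)) h1
    simpa using this
  have b : 0 ≤ ∫ y, φ (y + t) ∂ρ := integral_nonneg fun y => h0 _
  linarith

lemma Sh.zero (ρ : Measure ℝ) : Sh ρ 0 0 := by
  intro φ hm h0 h1
  simp

lemma Sh.abs {ρ : Measure ℝ} [IsProbabilityMeasure ρ] {t D : ℝ} (h : Sh ρ t D)
    (φ : ℝ → ℝ) (hm : Measurable φ) (h0 : ∀ x, 0 ≤ φ x) (h1 : ∀ x, φ x ≤ 1) :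
    |∫ y, φ y ∂ρ - ∫ y, φ (y + t) ∂ρ| ≤ D := by
  rw [abs_le]
  refine ⟨?_, h φ hm h0 h1⟩
  have := h (fun x => 1 - φ x) (by fun_prop) (fun x => by linarith [h1 x])
    (fun x => by linarith [h0 x])
  have i2 : Integrable (fun y => φ (y + t)) ρ :=
    integrable_of_unit ρ (hm.comp (measurable_add_const t)) (fun x => h0 _) (fun x => h1 _)
  rw [integral_sub (integrable_const _) (integrable_of_unit ρ hm h0 h1),
    integral_sub (integrable_const _) i2] at this
  linarith

lemma integral_conv_unit (c μ : Measure ℝ) [IsProbabilityMeasure c] [IsProbabilityMeasure μ]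
    (φ : ℝ → ℝ) (hm : Measurable φ) (h0 : ∀ x, 0 ≤ φ x) (h1 : ∀ x, φ x ≤ 1) :
    ∫ z, φ z ∂(c ∗ μ) = ∫ y, ∫ x, φ (x + y) ∂c ∂μ := by
  rw [Measure.conv, integral_map (by fun_prop) hm.aestronglyMeasurable]
  rw [integral_prod_symm]
  exact integrable_of_unit _ (hm.comp (by fun_prop)) (fun x => h0 _) (fun x => h1 _)

lemma Sh_step_aux (μ ρ ν : Measure ℝ) [IsFiniteMeasure ρ] [IsFiniteMeasure ν] (L t q D0 Dp Dm : ℝ)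
    (hμ : μ = ρ + (ν + Measure.map (fun y => y + L) ν))
    (hρ : ρ.real Set.univ = 1 - q) (hν : ν.real Set.univ = q / 2)
    (u : ℝ → ℝ) (hu : Measurable u) (h0 : ∀ x, 0 ≤ u x) (h1 : ∀ x, u x ≤ 1)
    (H0 : ∀ y, u y - u (y + t) ≤ D0) (Hp : ∀ y, u y - u (y + (t + L)) ≤ Dp)
    (Hm : ∀ y, u y - u (y + (t - L)) ≤ Dm) :
    ∫ y, u y ∂μ - ∫ y, u (y + t) ∂μ ≤ (1 - q) * D0 + q / 2 * (Dp + Dm) := by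
  have I : ∀ (κ : Measure ℝ) [IsFiniteMeasure κ] (s : ℝ), Integrable (fun y => u (y + s)) κ :=
    fun κ _ s => integrable_of_unit κ (hu.comp (measurable_add_const s)) (fun _ => h0 _) (fun _ => h1 _)
  have I0 : ∀ (κ : Measure ℝ) [IsFiniteMeasure κ], Integrable u κ :=
    fun κ _ => integrable_of_unit κ hu h0 h1
  have : IsFiniteMeasure (Measure.map (fun y => y + L) ν) := by infer_instance
  have e : ∀ s, ∫ y, u (y + s) ∂μ = ∫ y, u (y + s) ∂ρ +
      (∫ y, u (y + s) ∂ν + ∫ y, u (y + L + s) ∂ν) := by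
    intro s
    rw [hμ, integral_add_measure (I _ _) (I _ _), integral_add_measure (I _ _) (I _ _)]
    have : ∫ y, u (y + s) ∂(Measure.map (fun y => y + L) ν) = ∫ y, u (y + L + s) ∂ν :=
      integral_map (f := fun y => u (y + s)) (by fun_prop)
        (hu.comp (measurable_add_const s)).aestronglyMeasurable
    rw [this]
  have e0 : ∫ y, u y ∂μ = ∫ y, u y ∂ρ + (∫ y, u y ∂ν + ∫ y, u (y + L) ∂ν) := by
    have := e 0
    simpa using this
  rw [e0, e t]
  have a1 : ∫ y, u y ∂ρ - ∫ y, u (y + t) ∂ρ ≤ (1 - q) * D0 := by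
    rw [← integral_sub (I0 _) (I _ _)]
    refine (integral_mono ((I0 _).sub (I _ _)) (integrable_const D0) H0).trans ?_
    simp [hρ]
  have a2 : ∫ y, u y ∂ν - ∫ y, u (y + L + t) ∂ν ≤ q / 2 * Dp := by
    simp only [add_assoc]
    rw [← integral_sub (I0 _) (I _ _)]
    refine (integral_mono ((I0 _).sub (I _ _)) (integrable_const Dp) ?_).trans ?_
    · intro y; have := Hp y; rw [add_comm t L] at this; exact this
    simp [hν]
  have a3 : ∫ y, u (y + L) ∂ν - ∫ y, u (y + t) ∂ν ≤ q / 2 * Dm := by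
    rw [← integral_sub (I _ _) (I _ _)]
    refine (integral_mono ((I _ _).sub (I _ _)) (integrable_const Dm) ?_).trans ?_
    · intro y
      have := Hm (y + L)
      have e : y + L + (t - L) = y + t := by ring
      rw [e] at this
      exact this
    simp [hν]
  linarith

lemma Sh_step (c μ ρ ν : Measure ℝ) [IsProbabilityMeasure c] [IsProbabilityMeasure μ]
    [IsFiniteMeasure ρ] [IsFiniteMeasure ν] (L t q D0 Dp Dm : ℝ)
    (hμ : μ = ρ + (ν + Measure.map (fun y => y + L) ν))
    (hρ : ρ.real Set.univ = 1 - q) (hν : ν.real Set.univ = q / 2)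
    (H0 : Sh c t D0) (Hp : Sh c (t + L) Dp) (Hm : Sh c (t - L) Dm) :
    Sh (c ∗ μ) t ((1 - q) * D0 + q / 2 * (Dp + Dm)) := by
  intro φ hm h0 h1
  rw [integral_conv_unit c μ φ hm h0 h1, integral_conv_unit c μ (fun y => φ (y + t))
    (hm.comp (measurable_add_const t)) (fun _ => h0 _) (fun _ => h1 _)]
  have key : ∀ y s, ∫ x, φ (x + (y + s)) ∂c = ∫ x, φ (x + s + y) ∂c := by
    intro y s; congr 1; ext x; congr 1; ring
  have hS : ∀ s D, Sh c s D → ∀ y, (∫ x, φ (x + y) ∂c) - ∫ x, φ (x + (y + s)) ∂c ≤ D := by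
    intro s D h y
    rw [key]
    exact h (fun x => φ (x + y)) (hm.comp (measurable_add_const y)) (fun _ => h0 _) (fun _ => h1 _)
  have := Sh_step_aux μ ρ ν L t q D0 Dp Dm hμ hρ hν (fun y => ∫ x, φ (x + y) ∂c)
    ?_ (fun y => integral_nonneg fun x => h0 _) ?_ (hS _ _ H0) (hS _ _ Hp) (hS _ _ Hm)
  · have e : ∀ y, ∫ x, φ (x + y + t) ∂c = ∫ x, φ (x + (y + t)) ∂c := by
      intro y; simp only [add_assoc]
    simp only [e]
    exact this
  · have : StronglyMeasurable (fun p : ℝ × ℝ => φ (p.2 + p.1)) :=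
      (hm.comp (by fun_prop)).stronglyMeasurable
    exact (this.integral_prod_right).measurable
  · intro y
    have := integral_mono (integrable_of_unit c (hm.comp (measurable_add_const y)) (fun _ => h0 _)
      (fun _ => h1 _)) (integrable_const (1:ℝ)) (fun x => h1 (x + y))
    simpa using this

/-- Non-absorption probabilities of the lazy walk on the natural numbers. -/
noncomputable def hseq (q : ℝ) : ℕ → ℕ → ℝ
  | 0, 0 => 0
  | 0, _ + 1 => 1
  | _ + 1, 0 => 0
  | k + 1, j + 1 => (1 - q) * hseq q k (j + 1) + q / 2 * (hseq q k (j + 2) + hseq q k j)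

lemma hseq_zero (q : ℝ) (k : ℕ) : hseq q k 0 = 0 := by cases k <;> simp [hseq]

lemma hseq_nonneg {q : ℝ} (hq : 0 ≤ q) (hq1 : q ≤ 1) (k j : ℕ) : 0 ≤ hseq q k j := by
  induction k generalizing j with
  | zero => cases j <;> simp [hseq]
  | succ k ih =>
    cases j with
    | zero => simp [hseq]
    | succ j =>
      rw [hseq]
      have := ih (j+1); have := ih (j+2); have := ih j
      have : 0 ≤ 1 - q := by linarith
      positivity

lemma hseq_le_one {q : ℝ} (hq : 0 ≤ q) (hq1 : q ≤ 1) (k j : ℕ) : hseq q k j ≤ 1 := by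
  induction k generalizing j with
  | zero => cases j <;> simp [hseq]
  | succ k ih =>
    cases j with
    | zero => simp [hseq]
    | succ j =>
      rw [hseq]
      have := ih (j+1); have := ih (j+2); have := ih j
      nlinarith

lemma hseq_anti {q : ℝ} (hq : 0 ≤ q) (hq1 : q ≤ 1) (k j : ℕ) : hseq q (k + 1) j ≤ hseq q k j := by
  induction k generalizing j with
  | zero =>
    cases j with
    | zero => simp [hseq]
    | succ j => exact (hseq_le_one hq hq1 _ _).trans (by simp [hseq])
  | succ k ih =>
    cases j with
    | zero => simp [hseq]
    | succ j =>
      rw [hseq]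
      conv_rhs => rw [hseq]
      have := ih (j+1); have := ih (j+2); have := ih j
      have : 0 ≤ 1 - q := by linarith
      gcongr

lemma hseq_sum {q : ℝ} (hq : 0 < q) (hq1 : q ≤ 1) (R : ℕ) (hR : 0 < R) (k j : ℕ) (hj : j ≤ R) :
    ∑ i ∈ Finset.range k, hseq q i j ≤ k * (j / R) + j * (R - j) / q := by
  have hRr : (0:ℝ) < R := by exact_mod_cast hR
  induction k generalizing j with
  | zero =>
    have : (j:ℝ) ≤ R := by exact_mod_cast hj
    have : (0:ℝ) ≤ R - j := by linarith
    simp; positivity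
  | succ k ih =>
    rcases Nat.eq_zero_or_pos j with rfl | hj0
    · simp [hseq_zero]
    rcases hj.eq_or_lt with rfl | hlt
    · have := Finset.sum_le_sum (s := Finset.range (k+1)) (f := fun i => hseq q i j)
        (g := fun _ => (1:ℝ)) (fun i _ => hseq_le_one hq.le hq1 i j)
      simp at this
      rw [div_self hRr.ne']
      simpa using this
    · obtain ⟨j, rfl⟩ : ∃ i, j = i + 1 := ⟨j - 1, by omega⟩
      rw [Finset.sum_range_succ']
      simp only [hseq]
      rw [Finset.sum_add_distrib, ← Finset.mul_sum, ← Finset.mul_sum, Finset.sum_add_distrib]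
      have i1 := ih (j+1) hj
      have i2 := ih (j+2) (by omega)
      have i3 := ih j (by omega)
      have : 0 ≤ 1 - q := by linarith
      have j1 := mul_le_mul_of_nonneg_left i1 this
      have j2 := mul_le_mul_of_nonneg_left (add_le_add i2 i3) (by positivity : 0 ≤ q / 2)
      have hk : (0:ℝ) ≤ ((j + 1 : ℕ):ℝ) / R := by positivity
      have key : (1 - q) * (k * (((j + 1 : ℕ):ℝ) / R) + ((j+1 : ℕ):ℝ) * (R - ((j+1:ℕ):ℝ)) / q)
        + q / 2 * ((k * (((j + 2 : ℕ):ℝ) / R) + ((j+2 : ℕ):ℝ) * (R - ((j+2:ℕ):ℝ)) / q) +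
          (k * ((j:ℝ) / R) + (j:ℝ) * (R - (j:ℝ)) / q)) + 1 =
          k * (((j + 1 : ℕ):ℝ) / R) + ((j+1 : ℕ):ℝ) * (R - ((j+1:ℕ):ℝ)) / q := by
        push_cast
        field_simp
        ring
      push_cast at *
      nlinarith

lemma hseq_bound {q : ℝ} (hq : 0 < q) (hq1 : q ≤ 1) (k j : ℕ) (hk : 0 < k) :
    hseq q k j ≤ j * (1 + 2 / q) / Real.sqrt k := by
  have hkr : (1:ℝ) ≤ k := by exact_mod_cast hk
  set s := Real.sqrt k with hs
  have hs1 : 1 ≤ s := by rw [hs]; exact Real.one_le_sqrt.mpr hkr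
  have hss : s * s = k := Real.mul_self_sqrt (by linarith)
  set R := ⌈s⌉₊ with hRdef
  have hR1 : s ≤ R := Nat.le_ceil s
  have hR2 : (R:ℝ) ≤ 2 * s := by
    have := Nat.ceil_lt_add_one (by linarith : 0 ≤ s)
    linarith
  have hRpos : 0 < R := by
    have : (0:ℝ) < R := by linarith
    exact_mod_cast this
  rcases le_or_gt j R with hj | hj
  · have h1 := hseq_sum hq hq1 R hRpos k j hj
    have h2 : (k:ℝ) * hseq q k j ≤ ∑ i ∈ Finset.range k, hseq q i j := by
      have anti : Antitone (fun i => hseq q i j) := antitone_nat_of_succ_le fun i => hseq_anti hq.le hq1 i j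
      have := Finset.card_nsmul_le_sum (Finset.range k) (fun i => hseq q i j) (hseq q k j)
        (fun i hi => anti (Finset.mem_range.mp hi).le)
      simpa using this
    have h3 : (k:ℝ) * (j / R) ≤ s * j := by
      rw [← hss, mul_div_assoc', div_le_iff₀ (by linarith)]
      have : 0 ≤ s * j := by positivity
      nlinarith
    have h4 : (j:ℝ) * (R - j) / q ≤ j * (2 * s) / q := by
      gcongr
      have : (0:ℝ) ≤ j := by positivity
      linarith
    rw [le_div_iff₀ (by linarith)]
    have h5 : s * (hseq q k j * s) ≤ s * (j * (1 + 2 / q)) := by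
      calc s * (hseq q k j * s) = k * hseq q k j := by rw [← hss]; ring
        _ ≤ s * j + j * (2 * s) / q := by linarith
        _ = _ := by field_simp
    exact le_of_mul_le_mul_left h5 (by linarith)
  · refine (hseq_le_one hq.le hq1 k j).trans ?_
    rw [le_div_iff₀ (by linarith)]
    have : (R:ℝ) < j := by exact_mod_cast hj
    have : 0 ≤ 2 / q := by positivity
    nlinarith

/-- Iterated convolution. -/
noncomputable def cpow (μ : Measure ℝ) : ℕ → Measure ℝ
  | 0 => Measure.dirac 0
  | k + 1 => cpow μ k ∗ μ

instance cpow_prob (μ : Measure ℝ) [IsProbabilityMeasure μ] (k : ℕ) :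
    IsProbabilityMeasure (cpow μ k) := by
  induction k with
  | zero => rw [cpow]; infer_instance
  | succ k ih => rw [cpow]; infer_instance

lemma Sh_cpow (μ ρ ν : Measure ℝ) [IsProbabilityMeasure μ]
    [IsFiniteMeasure ρ] [IsFiniteMeasure ν] (L q : ℝ)
    (hμ : μ = ρ + (ν + Measure.map (fun y => y + L) ν))
    (hρ : ρ.real Set.univ = 1 - q) (hν : ν.real Set.univ = q / 2) (k j : ℕ) :
    Sh (cpow μ k) (j * L) (hseq q k j) := by
  induction k generalizing j with
  | zero =>
    cases j with
    | zero => simpa [hseq] using Sh.zero _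
    | succ j => rw [hseq]; exact Sh.le_one _ _
  | succ k ih =>
    cases j with
    | zero => simpa [hseq] using Sh.zero _
    | succ j =>
      rw [hseq, cpow]
      refine Sh_step _ μ ρ ν L _ q _ _ _ hμ hρ hν (ih _) ?_ ?_
      · have := ih (j+2); push_cast at *
        convert this using 1; ring
      · have := ih j; push_cast at *
        convert this using 1; ring

lemma exists_level (μ : Measure ℝ) [IsProbabilityMeasure μ] (hac : μ ≪ volume) :
    ∃ c : ℝ≥0∞, c ≠ 0 ∧ c ≠ ⊤ ∧ ∃ K : Set ℝ, IsCompact K ∧ volume K ≠ 0 ∧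
      ∀ s, MeasurableSet s → c * volume (s ∩ K) ≤ μ s := by
  set f := μ.rnDeriv volume with hf
  have hfm : Measurable f := Measure.measurable_rnDeriv _ _
  have hμ : volume.withDensity f = μ := Measure.withDensity_rnDeriv_eq _ _ hac
  obtain ⟨n, hn⟩ : ∃ n : ℕ, volume {x | ((n:ℝ≥0∞) + 1)⁻¹ ≤ f x} ≠ 0 := by
    by_contra! hcon
    have h0 : volume (⋃ n : ℕ, {x | ((n:ℝ≥0∞) + 1)⁻¹ ≤ f x}) = 0 := measure_iUnion_null hcon
    have h1 : f =ᵐ[volume] 0 := by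
      rw [Filter.EventuallyEq, ae_iff]
      refine measure_mono_null (fun x hx => ?_) h0
      obtain ⟨n, hn⟩ := ENNReal.exists_inv_nat_lt (show f x ≠ 0 from hx)
      refine Set.mem_iUnion.mpr ⟨n, ?_⟩
      refine le_trans ?_ hn.le
      gcongr
      exact le_self_add
    have h2 : μ Set.univ = 0 := by
      rw [← hμ, withDensity_congr_ae h1]; simp
    simp at h2
  have hm : MeasurableSet {x | ((n:ℝ≥0∞) + 1)⁻¹ ≤ f x} := measurableSet_le measurable_const hfm
  obtain ⟨K, hKs, hK, hKpos⟩ := hm.exists_lt_isCompact (pos_iff_ne_zero.mpr hn)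
  refine ⟨((n:ℝ≥0∞) + 1)⁻¹, ?_, ?_, K, hK, hKpos.ne', ?_⟩
  · simp
  · simp
  · intro s hs
    rw [← hμ]
    have hsK : MeasurableSet (s ∩ K) := hs.inter hK.measurableSet
    calc ((n:ℝ≥0∞) + 1)⁻¹ * volume (s ∩ K) = ∫⁻ _ in s ∩ K, ((n:ℝ≥0∞) + 1)⁻¹ := by simp
      _ ≤ ∫⁻ x in s ∩ K, f x := setLIntegral_mono' hsK fun x hx => hKs hx.2
      _ ≤ ∫⁻ x in s, f x := lintegral_mono_set Set.inter_subset_left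
      _ = _ := (withDensity_apply _ hs).symm

open scoped Pointwise in
lemma exists_decomp (μ : Measure ℝ) [IsProbabilityMeasure μ] (hac : μ ≪ volume) :
    ∃ q0 > 0, ∃ L0 > 0, ∀ L, 0 ≤ L → L ≤ L0 → ∃ ρ ν : Measure ℝ, ∃ q : ℝ, IsFiniteMeasure ρ ∧
      IsFiniteMeasure ν ∧ q0 ≤ q ∧ q ≤ 1 ∧ μ = ρ + (ν + Measure.map (fun y => y + L) ν) ∧
      ρ.real Set.univ = 1 - q ∧ ν.real Set.univ = q / 2 := by
  obtain ⟨c, hc0, hct, K, hK, hKpos, hKμ⟩ := exists_level μ hac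
  have hKt : volume K ≠ ⊤ := hK.measure_lt_top.ne
  have hev := eventually_nhds_zero_measure_vadd_sdiff_lt (μ := volume) hK hK.isClosed
    (ε := volume K / 2) (by simp [hKpos])
  obtain ⟨L1, hL1, hball⟩ := Metric.eventually_nhds_iff.mp hev
  refine ⟨(c * (volume K / 2)).toReal, ?_, L1 / 2, by positivity, ?_⟩
  · apply ENNReal.toReal_pos
    · simp [hc0, hKpos]
    · exact ENNReal.mul_ne_top hct (ENNReal.div_ne_top hKt (by simp))
  intro L hL hLL
  have hlt : volume ((L +ᵥ K) \ K) < volume K / 2 := by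
    apply hball
    rw [Real.dist_eq, sub_zero, abs_of_nonneg hL]
    linarith
  set K' := K ∩ (fun y => y + L) ⁻¹' K with hK'
  have hKm := hK.measurableSet
  have hK'm : MeasurableSet K' := hKm.inter (measurable_add_const L hKm)
  have hvK' : volume K / 2 ≤ volume K' := by
    have h1 : volume K ≤ volume K' + volume ((fun y => y + L) ⁻¹' ((L +ᵥ K) \ K)) := by
      refine (measure_mono ?_).trans (measure_union_le _ _)
      intro x hx
      by_cases h : x + L ∈ K
      · exact Or.inl ⟨hx, h⟩
      · refine Or.inr ⟨?_, h⟩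
        exact ⟨x, hx, by simp [add_comm]⟩
    rw [measure_preimage_add_right] at h1
    have h2 : volume K ≤ volume K' + volume K / 2 := h1.trans (by gcongr)
    have h3 : volume K / 2 + volume K / 2 ≤ volume K' + volume K / 2 := by
      rwa [ENNReal.add_halves]
    exact (ENNReal.add_le_add_iff_right (ENNReal.div_ne_top hKt (by simp))).mp h3
  set ν : Measure ℝ := (c / 2) • volume.restrict K' with hν
  have hK't : volume K' ≠ ⊤ := ne_top_of_le_ne_top hKt (measure_mono Set.inter_subset_left)
  have hc2 : c / 2 ≠ ⊤ := ENNReal.div_ne_top hct (by simp)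
  have hνu : ν Set.univ = c / 2 * volume K' := by simp [hν]
  have hνf : IsFiniteMeasure ν := ⟨by rw [hνu]; exact (ENNReal.mul_ne_top hc2 hK't).lt_top⟩
  have hle : ν + Measure.map (fun y => y + L) ν ≤ μ := by
    rw [Measure.le_iff]
    intro s hs
    have hsm := measurable_add_const L hs
    rw [Measure.add_apply, Measure.map_apply (measurable_add_const L) hs, hν,
      Measure.smul_apply, Measure.smul_apply, Measure.restrict_apply hs, Measure.restrict_apply hsm]
    refine le_trans ?_ (hKμ s hs)
    have a1 : volume (s ∩ K') ≤ volume (s ∩ K) := measure_mono (by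
      intro x hx; exact ⟨hx.1, hx.2.1⟩)
    have a2 : volume ((fun y => y + L) ⁻¹' s ∩ K') ≤ volume (s ∩ K) := by
      rw [← measure_preimage_add_right volume L (s ∩ K)]
      exact measure_mono (by intro x hx; exact ⟨hx.1, hx.2.2⟩)
    calc _ ≤ (c / 2) • volume (s ∩ K) + (c/2) • volume (s ∩ K) := by
          simp only [smul_eq_mul]; gcongr
      _ = _ := by simp only [smul_eq_mul]; rw [← add_mul, ENNReal.add_halves]
  have hsub := Measure.sub_add_cancel_of_le hle
  have hρf : IsFiniteMeasure (μ - (ν + Measure.map (fun y => y + L) ν)) := inferInstance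
  have hmapu : (Measure.map (fun y => y + L) ν).real Set.univ = ν.real Set.univ := by
    simp [Measure.real, Measure.map_apply (measurable_add_const L) MeasurableSet.univ]
  have htot : (μ - (ν + Measure.map (fun y => y + L) ν)).real Set.univ +
      (ν.real Set.univ + ν.real Set.univ) = 1 := by
    have : μ.real Set.univ = 1 := by simp
    rw [← hsub, measureReal_add_apply, measureReal_add_apply, hmapu] at this
    exact this
  refine ⟨μ - (ν + Measure.map (fun y => y + L) ν), ν, 2 * ν.real Set.univ, hρf, hνf, ?_, ?_,
    hsub.symm, ?_, ?_⟩
  · have : (c * (volume K / 2)) ≤ 2 * ν Set.univ := by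
      rw [hνu]
      calc c * (volume K / 2) ≤ c * volume K' := by gcongr
        _ = 2 * (c / 2 * volume K') := by
          rw [← mul_assoc, ENNReal.mul_div_cancel (by simp) (by simp)]
    have h2 := ENNReal.toReal_mono (ENNReal.mul_ne_top (by simp) (measure_ne_top ν _)) this
    simpa [Measure.real] using h2
  · have : 0 ≤ (μ - (ν + Measure.map (fun y => y + L) ν)).real Set.univ := measureReal_nonneg
    linarith
  · linarith
  · ring

lemma Sh_cpow_bound (μ : Measure ℝ) [IsProbabilityMeasure μ] (hac : μ ≪ volume) :
    ∃ C > 0, ∀ k : ℕ, 0 < k → ∀ t, 0 ≤ t → Sh (cpow μ k) t (C * (t + 1) / Real.sqrt k) := by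
  obtain ⟨q0, hq0, L0, hL0, H⟩ := exists_decomp μ hac
  refine ⟨(1 + 1 / L0) * (1 + 2 / q0), by positivity, fun k hk t ht => ?_⟩
  set j := ⌊t / L0⌋₊ + 1 with hj
  have hjt : t / L0 ≤ j := by rw [hj]; push_cast; exact (Nat.lt_floor_add_one _).le
  have hjp : (0:ℝ) < j := by rw [hj]; positivity
  have hj2 : (j:ℝ) ≤ t / L0 + 1 := by
    rw [hj]; push_cast
    have := Nat.floor_le (by positivity : 0 ≤ t / L0)
    linarith
  obtain ⟨ρ, ν, q, _, _, hq, hq1, h1, h2, h3⟩ := H (t / j) (by positivity) (by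
    rw [div_le_iff₀ hjp]; rw [div_le_iff₀ hL0] at hjt; linarith)
  have := Sh_cpow μ ρ ν _ q h1 h2 h3 k j
  rw [mul_div_cancel₀ _ hjp.ne'] at this
  refine this.mono ((hseq_bound (by linarith) hq1 k j hk).trans ?_)
  have a : (j:ℝ) ≤ (1 + 1 / L0) * (t + 1) := by
    have : (1 + 1 / L0) * (t + 1) = t / L0 + 1 + (t + 1 / L0) := by field_simp; ring
    have : 0 ≤ t + 1 / L0 := by positivity
    linarith
  have b : 1 + 2 / q ≤ 1 + 2 / q0 := by gcongr
  have e : (1 + 1 / L0) * (1 + 2 / q0) * (t + 1) = (1 + 1 / L0) * (t + 1) * (1 + 2 / q0) := by ring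
  rw [e]
  have : 0 < q := by linarith
  gcongr

/-- Gaussian tail. -/
noncomputable def gT (a : ℝ) : ℝ := (gaussianReal 0 1).real (Set.Ici a)

instance halfNormal_prob : IsProbabilityMeasure halfNormal := by
  unfold halfNormal
  exact Measure.isProbabilityMeasure_map (by fun_prop)

lemma pdf_le_one (x : ℝ) : gaussianPDFReal 0 1 x ≤ 1 := by
  rw [gaussianPDFReal]
  have h1 : (√(2 * Real.pi * ((1 : NNReal) : ℝ)))⁻¹ ≤ 1 := by
    apply inv_le_one_of_one_le₀
    rw [Real.one_le_sqrt]
    have := Real.pi_gt_three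
    simp; linarith
  have h2 : Real.exp (-(x - 0) ^ 2 / (2 * ((1 : NNReal) : ℝ))) ≤ 1 := by
    rw [Real.exp_le_one_iff]
    apply div_nonpos_of_nonpos_of_nonneg
    · have := sq_nonneg (x - 0); linarith
    · positivity
  calc _ ≤ (1:ℝ) * 1 := by gcongr
    _ = 1 := by norm_num

lemma pdf_abs (x : ℝ) : gaussianPDFReal 0 1 |x| = gaussianPDFReal 0 1 x := by
  simp [gaussianPDFReal]

lemma pdf_anti {x y : ℝ} (hx : 0 ≤ x) (hxy : x ≤ y) :
    gaussianPDFReal 0 1 y ≤ gaussianPDFReal 0 1 x := by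
  simp only [gaussianPDFReal, sub_zero]
  gcongr

lemma gauss_noatoms : NullSingletonClass (gaussianReal 0 1) :=
  nullSingletonClass_gaussianReal (by norm_num)

lemma gauss_neg (a : ℝ) : (gaussianReal 0 1).real (Set.Iic (-a)) = gT a := by
  have h := gaussianReal_map_neg (μ := 0) (v := 1)
  simp only [neg_zero] at h
  rw [gT, Measure.real, Measure.real]
  conv_rhs => rw [← h, Measure.map_apply (by fun_prop) measurableSet_Ici]
  congr 2
  ext x; simp only [Set.mem_Iic, Set.mem_preimage, Set.mem_Ici]
  constructor <;> intro h <;> linarith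

lemma gT_zero : gT 0 = 1 / 2 := by
  have := gauss_noatoms
  have h1 := gauss_neg 0
  have h2 : (gaussianReal 0 1).real (Set.Iic (-0)) = 1 - gT 0 := by
    rw [gT, neg_zero, ← Set.compl_Ioi, probReal_compl_eq_one_sub measurableSet_Ioi]
    congr 1
    exact measureReal_congr Ioi_ae_eq_Ici
  linarith

lemma gT_lip {x y : ℝ} (h : x ≤ y) : gT x - gT y ≤ y - x := by
  have h1 : gT x = (gaussianReal 0 1).real (Set.Ico x y) + gT y := by
    rw [gT, gT, ← measureReal_union _ measurableSet_Ici, Set.Ico_union_Ici_eq_Ici h]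
    rw [Set.disjoint_left]; intro z hz hz'; exact absurd hz.2 (not_lt.mpr hz')
  have h2 : (gaussianReal 0 1).real (Set.Ico x y) ≤ y - x := by
    rw [Measure.real, gaussianReal_apply _ (by norm_num)]
    apply ENNReal.toReal_le_of_le_ofReal (by linarith)
    calc ∫⁻ z in Set.Ico x y, gaussianPDF 0 1 z ≤ ∫⁻ z in Set.Ico x y, 1 := by
          apply lintegral_mono; intro z
          rw [gaussianPDF]
          exact ENNReal.ofReal_le_one.mpr (pdf_le_one z)
      _ = _ := by simp
  linarith

lemma gT_anti {x y : ℝ} (h : x ≤ y) : gT y ≤ gT x := measureReal_mono (Set.Ici_subset_Ici.mpr h)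

lemma tail_tendsto (ν : Measure ℝ) [IsProbabilityMeasure ν] :
    Tendsto (fun a => ν.real (Set.Ici a)) atTop (nhds 0) := by
  have h := (ENNReal.tendsto_toReal (measure_ne_top ν Set.univ)).comp (tendsto_measure_Iic_atTop ν)
  have h2 : Tendsto (fun a => 1 - ν.real (Set.Iic a)) atTop (nhds (1 - 1)) := by
    refine tendsto_const_nhds.sub ?_
    simpa [Function.comp_def, Measure.real] using h
  have h3 : Tendsto (fun a => ν.real (Set.Ioi a)) atTop (nhds 0) := by
    rw [sub_self] at h2
    refine h2.congr fun a => ?_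
    rw [← Set.compl_Iic, probReal_compl_eq_one_sub measurableSet_Iic]
  have h4 := h3.comp (tendsto_atTop_add_const_right atTop (-1 : ℝ) tendsto_id)
  refine squeeze_zero (fun _ => measureReal_nonneg) (fun a => ?_) h4
  refine measureReal_mono (fun x hx => ?_) (measure_ne_top _ _)
  simp only [Set.mem_Ici, Set.mem_Ioi, id] at *
  linarith

lemma tail_tendsto_bot (ν : Measure ℝ) [IsProbabilityMeasure ν] :
    Tendsto (fun a => ν.real (Set.Ici (-a))) atTop (nhds 1) := by
  have h := (ENNReal.tendsto_toReal (measure_ne_top ν Set.univ)).comp (tendsto_measure_Ici_atBot ν)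
  have h2 := h.comp tendsto_neg_atTop_atBot
  simpa [Function.comp_def, Measure.real] using h2

lemma halfNormal_tail {a : ℝ} (ha : 0 < a) : halfNormal.real (Set.Ici a) = 2 * gT a := by
  have h : (fun y : ℝ => |y|) ⁻¹' (Set.Ici a) = Set.Iic (-a) ∪ Set.Ici a := by
    ext x; simp only [Set.mem_preimage, Set.mem_Ici, Set.mem_union, Set.mem_Iic, le_abs']
  rw [halfNormal, Measure.real, Measure.map_apply (by fun_prop) measurableSet_Ici, h]
  have := gauss_neg a
  rw [← Measure.real, measureReal_union _ measurableSet_Ici, gauss_neg, gT]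
  · ring
  · rw [Set.disjoint_left]; intro z hz hz'
    simp at hz hz'; linarith

lemma halfNormal_integral (φ : ℝ → ℝ) (hm : Measurable φ) :
    ∫ y, φ y ∂halfNormal = 2 * ∫ y in Set.Ioi 0, gaussianPDFReal 0 1 y * φ y := by
  rw [halfNormal, integral_map (by fun_prop) hm.aestronglyMeasurable,
    integral_gaussianReal_eq_integral_smul (by norm_num)]
  rw [← integral_comp_abs (f := fun y => gaussianPDFReal 0 1 y * φ y)]
  simp [pdf_abs]

lemma Sh_halfNormal {s : ℝ} (hs : 0 ≤ s) : Sh halfNormal s (2 * s) := by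
  intro φ hm h0 h1
  rw [halfNormal_integral φ hm, halfNormal_integral (fun y => φ (y + s)) (by fun_prop)]
  have hg := integrable_gaussianPDFReal 0 1
  have hgm := measurable_gaussianPDFReal 0 1
  have I : ∀ ψ : ℝ → ℝ, Measurable ψ → (∀ x, 0 ≤ ψ x) → (∀ x, ψ x ≤ 1) →
      Integrable (fun y => gaussianPDFReal 0 1 y * ψ y) := by
    intro ψ a b c
    refine hg.mono (hgm.mul a).aestronglyMeasurable (ae_of_all _ fun x => ?_)
    rw [norm_mul]
    have : ‖ψ x‖ ≤ 1 := by rw [Real.norm_eq_abs, abs_of_nonneg (b x)]; exact c x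
    exact mul_le_of_le_one_right (norm_nonneg _) this
  have J1 := I φ hm h0 h1
  have J2 := I (fun y => φ (y + s)) (by fun_prop) (fun _ => h0 _) (fun _ => h1 _)
  have J3 := J1.comp_add_right s
  have a1 : ∫ y in Set.Ioi 0, gaussianPDFReal 0 1 (y + s) * φ (y + s) ≤
      ∫ y in Set.Ioi 0, gaussianPDFReal 0 1 y * φ (y + s) := by
    refine setIntegral_mono_on J3.integrableOn J2.integrableOn measurableSet_Ioi fun y hy => ?_
    exact mul_le_mul_of_nonneg_right (pdf_anti (le_of_lt hy) (by linarith)) (h0 _)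
  have a2 : ∫ y in Set.Ioi 0, gaussianPDFReal 0 1 (y + s) * φ (y + s) =
      ∫ y in Set.Ioi s, gaussianPDFReal 0 1 y * φ y := by
    have := (measurePreserving_add_right volume s).setIntegral_preimage_emb
      (measurableEmbedding_addRight s) (fun y => gaussianPDFReal 0 1 y * φ y) (Set.Ioi s)
    rw [← this]
    simp
  have a3 : ∫ y in Set.Ioi 0, gaussianPDFReal 0 1 y * φ y =
      (∫ y in Set.Ioc 0 s, gaussianPDFReal 0 1 y * φ y) +
      ∫ y in Set.Ioi s, gaussianPDFReal 0 1 y * φ y := by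
    rw [← setIntegral_union _ measurableSet_Ioi J1.integrableOn J1.integrableOn,
      Set.Ioc_union_Ioi_eq_Ioi hs]
    rw [Set.disjoint_left]; intro z hz hz'; exact absurd hz.2 (not_le.mpr hz')
  have a4 : ∫ y in Set.Ioc 0 s, gaussianPDFReal 0 1 y * φ y ≤ s := by
    have := setIntegral_mono_on (s := Set.Ioc 0 s) (μ := volume) J1.integrableOn
      (g := fun _ => (1:ℝ)) (by simp) measurableSet_Ioc (fun y _ =>
        mul_le_one₀ (pdf_le_one y) (h0 y) (h1 y))
    refine this.trans ?_
    simp [hs]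
  linarith

/-! Smoothing -/

lemma grid_approx (ν : Measure ℝ) [IsProbabilityMeasure ν] (K : ℝ → ℝ) (hK : Measurable K)
    (h0 : ∀ x, 0 ≤ K x) (h1 : ∀ x, K x ≤ 1) (Λ : ℝ) (hΛ : 0 ≤ Λ)
    (hL : ∀ x y, |K x - K y| ≤ Λ * |x - y|) (r : ℝ) (hr : 0 < r) (M : ℕ) :
    |∫ y in Set.Ico r ((M + 1) * r), K y ∂ν - ∑ i ∈ Finset.range M,
      K ((i + 1) * r) * ν.real (Set.Ico ((i + 1) * r) ((i + 2) * r))| ≤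
      Λ * r * ν.real (Set.Ico r ((M + 1) * r)) := by
  have I := integrable_of_unit ν hK h0 h1
  induction M with
  | zero => simp
  | succ M ih =>
    rw [Finset.sum_range_succ]
    have hMr : 0 ≤ (M:ℝ) * r := by positivity
    have hu : Set.Ico r (((M + 1 : ℕ) + 1) * r) =
        Set.Ico r ((M + 1) * r) ∪ Set.Ico ((M + 1) * r) ((M + 2) * r) := by
      rw [Set.Ico_union_Ico_eq_Ico (by nlinarith) (by nlinarith)]
      push_cast; congr 1; ring
    have hd : Disjoint (Set.Ico r ((M + 1) * r)) (Set.Ico ((M + 1) * r) ((M + 2) * r)) := by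
      rw [Set.disjoint_left]; intro z hz hz'; exact absurd hz.2 (not_lt.mpr hz'.1)
    rw [hu, setIntegral_union hd measurableSet_Ico I.integrableOn I.integrableOn,
      measureReal_union hd measurableSet_Ico]
    set J := Set.Ico (((M:ℝ) + 1) * r) ((M + 2) * r) with hJ
    have key : |∫ y in J, K y ∂ν - K ((M + 1) * r) * ν.real J| ≤ Λ * r * ν.real J := by
      have e : ∫ y in J, K y ∂ν - K ((M + 1) * r) * ν.real J =
          ∫ y in J, (K y - K ((M + 1) * r)) ∂ν := by
        rw [integral_sub I.integrableOn (integrable_const _)]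
        simp [mul_comm]
      rw [e, ← Real.norm_eq_abs]
      refine norm_setIntegral_le_of_norm_le_const (measure_lt_top _ _) (fun y hy => ?_)
      rw [Real.norm_eq_abs]
      refine (hL _ _).trans ?_
      gcongr
      rw [abs_of_nonneg (by linarith [hy.1])]
      have := hy.2
      nlinarith
    calc _ = |(∫ y in Set.Ico r ((M + 1) * r), K y ∂ν - ∑ i ∈ Finset.range M,
          K ((i + 1) * r) * ν.real (Set.Ico ((i + 1) * r) ((i + 2) * r))) +
          (∫ y in J, K y ∂ν - K ((M + 1) * r) * ν.real J)| := by congr 1; ring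
      _ ≤ _ := abs_add_le _ _
      _ ≤ _ := by rw [mul_add]; exact add_le_add ih key

lemma grid_approx' (ν : Measure ℝ) [IsProbabilityMeasure ν] (K : ℝ → ℝ) (hK : Measurable K)
    (h0 : ∀ x, 0 ≤ K x) (h1 : ∀ x, K x ≤ 1) (Λ : ℝ) (hΛ : 0 ≤ Λ)
    (hL : ∀ x y, |K x - K y| ≤ Λ * |x - y|) (r : ℝ) (hr : 0 < r) (M : ℕ) :
    |∫ y, K y ∂ν - ∑ i ∈ Finset.range M,
      K ((i + 1) * r) * ν.real (Set.Ico ((i + 1) * r) ((i + 2) * r))| ≤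
      Λ * r + (1 - ν.real (Set.Ico r ((M + 1) * r))) := by
  have I := integrable_of_unit ν hK h0 h1
  have h := grid_approx ν K hK h0 h1 Λ hΛ hL r hr M
  set J := Set.Ico r ((M + 1) * r) with hJ
  have e := integral_add_compl (s := J) measurableSet_Ico I
  have b0 : 0 ≤ ∫ y in Jᶜ, K y ∂ν := integral_nonneg fun y => h0 y
  have b1 : ∫ y in Jᶜ, K y ∂ν ≤ 1 - ν.real J := by
    rw [← probReal_compl_eq_one_sub (s := J) measurableSet_Ico]
    refine (integral_mono I.integrableOn (integrable_const (1:ℝ)) h1).trans ?_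
    simp
  have b2 : Λ * r * ν.real J ≤ Λ * r := mul_le_of_le_one_right (by positivity) measureReal_le_one
  rw [← e]
  rw [abs_le] at *
  constructor <;> linarith [h.1, h.2]

lemma smooth_K (φ : ℝ → ℝ) (hm : Measurable φ) (h0 : ∀ x, 0 ≤ φ x) (h1 : ∀ x, φ x ≤ 1)
    (δ : ℝ) (hδ : 0 < δ) : ∃ K : ℝ → ℝ, Measurable K ∧ (∀ x, 0 ≤ K x) ∧ (∀ x, K x ≤ 1) ∧
      (∀ x y, |K x - K y| ≤ 2 / δ * |x - y|) ∧
      ∀ (ν : Measure ℝ) [IsProbabilityMeasure ν] (D : ℝ), (∀ s, 0 ≤ s → s ≤ δ → Sh ν s D) →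
        |∫ y, φ y ∂ν - ∫ y, K y ∂ν| ≤ D := by
  have hInt : ∀ y, Integrable (fun s => φ (y + s)) (volume.restrict (Set.Ioc 0 δ)) := fun y =>
    integrable_of_unit _ (hm.comp (measurable_const_add y)) (fun _ => h0 _) (fun _ => h1 _)
  refine ⟨fun y => δ⁻¹ * ∫ s in Set.Ioc 0 δ, φ (y + s), ?_, ?_, ?_, ?_, ?_⟩
  · have : StronglyMeasurable (fun p : ℝ × ℝ => φ (p.1 + p.2)) :=
      (hm.comp (by fun_prop)).stronglyMeasurable
    exact ((this.integral_prod_right).measurable).const_mul _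
  · intro x
    have : 0 ≤ ∫ s in Set.Ioc 0 δ, φ (x + s) := integral_nonneg fun s => h0 (x + s)
    exact mul_nonneg (by positivity) this
  · intro x
    have := integral_mono (hInt x) (integrable_const (1:ℝ)) (fun s => h1 (x + s))
    simp [hδ.le] at this
    rw [inv_mul_le_iff₀ hδ]; simpa using this
  · intro x y
    have II : ∀ a b, IntervalIntegrable φ volume a b := by
      intro a b
      rw [intervalIntegrable_iff]
      have : IsFiniteMeasure (volume.restrict (Set.uIoc a b)) := ⟨by simp [Set.uIoc]⟩
      exact integrable_of_unit _ hm h0 h1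
    have e : ∀ x, ∫ s in Set.Ioc 0 δ, φ (x + s) = ∫ s in x..(x + δ), φ s := by
      intro x
      rw [← intervalIntegral.integral_of_le hδ.le, intervalIntegral.integral_comp_add_left]
      simp
    have bd : ∀ a b, |∫ s in a..b, φ s| ≤ |b - a| := by
      intro a b
      have := intervalIntegral.norm_integral_le_of_norm_le_const (a := a) (b := b) (f := φ) (C := 1)
        (fun x _ => by rw [Real.norm_eq_abs, abs_of_nonneg (h0 x)]; exact h1 x)
      simpa using this
    have key : (∫ s in x..(x + δ), φ s) - ∫ s in y..(y + δ), φ s =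
        (∫ s in x..y, φ s) - ∫ s in (x + δ)..(y + δ), φ s := by
      rw [intervalIntegral.integral_interval_sub_interval_comm (II _ _) (II _ _) (II _ _)]
    have p : |(∫ s in x..(x + δ), φ s) - ∫ s in y..(y + δ), φ s| ≤ 2 * |x - y| := by
      rw [key]
      refine (abs_sub _ _).trans ?_
      have b1 := bd x y
      have b2 := bd (x + δ) (y + δ)
      have e2 : y + δ - (x + δ) = y - x := by ring
      rw [e2] at b2
      rw [abs_sub_comm y x] at b1 b2
      linarith
    simp only [e]
    rw [← mul_sub, abs_mul, abs_of_pos (by positivity : 0 < δ⁻¹), div_eq_inv_mul, mul_assoc]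
    gcongr
  · intro ν _ D hSh
    have sw : ∫ y, (∫ s in Set.Ioc 0 δ, φ (y + s)) ∂ν = ∫ s in Set.Ioc 0 δ, ∫ y, φ (y + s) ∂ν := by
      apply integral_integral_swap
      exact integrable_of_unit _ (hm.comp (by fun_prop)) (fun _ => h0 _) (fun _ => h1 _)
    rw [integral_const_mul, sw]
    have I3 : Integrable (fun s => ∫ y, φ (y + s) ∂ν) (volume.restrict (Set.Ioc 0 δ)) := by
      have hs : StronglyMeasurable (fun p : ℝ × ℝ => φ (p.2 + p.1)) :=
        (hm.comp (by fun_prop)).stronglyMeasurable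
      refine integrable_of_unit _ (hs.integral_prod_right).measurable
        (fun _ => integral_nonneg fun _ => h0 _) (fun s => ?_)
      have := integral_mono (integrable_of_unit ν (hm.comp (measurable_add_const s)) (fun _ => h0 _)
        (fun _ => h1 _)) (integrable_const (1:ℝ)) (fun x => h1 (x + s))
      simpa using this
    have e : ∫ y, φ y ∂ν - δ⁻¹ * ∫ s in Set.Ioc 0 δ, ∫ y, φ (y + s) ∂ν =
        δ⁻¹ * ∫ s in Set.Ioc 0 δ, (∫ y, φ y ∂ν - ∫ y, φ (y + s) ∂ν) := by
      rw [integral_sub (integrable_const _) I3]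
      simp [hδ.le]
      field_simp
    rw [e, abs_mul, abs_of_pos (by positivity : 0 < δ⁻¹), inv_mul_le_iff₀ hδ]
    have := norm_setIntegral_le_of_norm_le_const (μ := volume) (s := Set.Ioc 0 δ) (C := D)
      (f := fun s => (∫ y, φ y ∂ν - ∫ y, φ (y + s) ∂ν)) (by simp)
      (fun s hs => (hSh s hs.1.le hs.2).abs φ hm h0 h1)
    simp [hδ.le] at this
    linarith

lemma smoothing (μs : ℕ → Measure ℝ) (μ : Measure ℝ) [∀ n, IsProbabilityMeasure (μs n)]
    [IsProbabilityMeasure μ]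
    (hT : ∀ a > 0, Tendsto (fun n => (μs n).real (Set.Ici a)) atTop (nhds (μ.real (Set.Ici a))))
    (hT0 : ∀ ε > 0, ∃ r0 > 0, ∀ r, 0 < r → r ≤ r0 → 1 - μ.real (Set.Ici r) ≤ ε)
    (hSμ : ∀ ε > 0, ∃ δ > 0, ∀ s, 0 ≤ s → s ≤ δ → Sh μ s ε)
    (hS : ∀ ε > 0, ∃ δ > 0, ∀ᶠ n in atTop, ∀ s, 0 ≤ s → s ≤ δ → Sh (μs n) s ε) :
    ∀ ε > 0, ∀ᶠ n in atTop, ∀ φ : ℝ → ℝ, Measurable φ → (∀ x, 0 ≤ φ x) → (∀ x, φ x ≤ 1) →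
      |∫ y, φ y ∂(μs n) - ∫ y, φ y ∂μ| ≤ 10 * ε := by
  intro ε hε
  obtain ⟨δ1, hδ1, h1⟩ := hSμ ε hε
  obtain ⟨δ2, hδ2, h2⟩ := hS ε hε
  set δ := min δ1 δ2 with hδ
  have hδp : 0 < δ := lt_min hδ1 hδ2
  obtain ⟨r0, hr0, hr⟩ := hT0 ε hε
  set r := min r0 (ε * δ / 2) with hrd
  have hrp : 0 < r := lt_min hr0 (by positivity)
  have hΛr : 2 / δ * r ≤ ε := by
    have : r ≤ ε * δ / 2 := min_le_right _ _
    calc 2 / δ * r ≤ 2 / δ * (ε * δ / 2) := by gcongr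
      _ = ε := by field_simp
  obtain ⟨M, hM⟩ : ∃ M : ℕ, μ.real (Set.Ici ((M + 1) * r)) ≤ ε := by
    have ht : Tendsto (fun M : ℕ => ((M:ℝ) + 1) * r) atTop atTop :=
      (tendsto_atTop_add_const_right _ _ tendsto_natCast_atTop_atTop).atTop_mul_const hrp
    exact (((tail_tendsto μ).comp ht).eventually (ge_mem_nhds hε)).exists
  have hIco : ∀ (ν : Measure ℝ) [IsProbabilityMeasure ν] (a b : ℝ), a ≤ b →
      ν.real (Set.Ico a b) = ν.real (Set.Ici a) - ν.real (Set.Ici b) := by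
    intro ν _ a b hab
    rw [eq_sub_iff_add_eq, ← measureReal_union _ measurableSet_Ici, Set.Ico_union_Ici_eq_Ici hab]
    rw [Set.disjoint_left]; intro z hz hz'; exact absurd hz.2 (not_lt.mpr hz')
  have hIt : ∀ a b, 0 < a → a ≤ b → Tendsto (fun n => (μs n).real (Set.Ico a b)) atTop
      (nhds (μ.real (Set.Ico a b))) := by
    intro a b ha hab
    rw [hIco μ a b hab]
    refine ((hT a ha).sub (hT b (ha.trans_le hab))).congr fun n => ?_
    rw [hIco _ a b hab]
  have hrM : r ≤ (M + 1) * r := by nlinarith [(Nat.cast_nonneg M : (0:ℝ) ≤ M)]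
  have hμI : 1 - μ.real (Set.Ico r ((M + 1) * r)) ≤ 2 * ε := by
    rw [hIco μ _ _ hrM]
    have := hr r hrp (min_le_left _ _)
    linarith
  have ev1 : ∀ᶠ n in atTop, 1 - (μs n).real (Set.Ico r ((M + 1) * r)) ≤ 3 * ε := by
    have := (tendsto_const_nhds (x := (1:ℝ))).sub (hIt r ((M + 1) * r) hrp hrM)
    exact this.eventually (ge_mem_nhds (by linarith))
  have ev2 : ∀ᶠ n in atTop, ∑ i ∈ Finset.range M, |(μs n).real (Set.Ico ((i + 1) * r) ((i + 2) * r))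
      - μ.real (Set.Ico ((i + 1) * r) ((i + 2) * r))| ≤ ε := by
    have : Tendsto (fun n => ∑ i ∈ Finset.range M, |(μs n).real (Set.Ico (((i:ℝ) + 1) * r) ((i + 2) * r))
      - μ.real (Set.Ico (((i:ℝ) + 1) * r) ((i + 2) * r))|) atTop
        (nhds (∑ i ∈ Finset.range M, 0)) := by
      refine tendsto_finsetSum _ fun i _ => ?_
      have := (hIt ((i + 1) * r) ((i + 2) * r) (by positivity) (by nlinarith)).sub_const
        (μ.real (Set.Ico ((i + 1) * r) ((i + 2) * r)))
      simpa using this.abs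
    rw [Finset.sum_const_zero] at this
    exact this.eventually (ge_mem_nhds hε)
  filter_upwards [h2, ev1, ev2] with n hn2 hn3 hn4 φ hm p0 p1
  obtain ⟨K, hKm, hK0, hK1, hKL, hKν⟩ := smooth_K φ hm p0 p1 δ hδp
  have a1 := hKν μ ε (fun s u v => h1 s u (v.trans (min_le_left _ _)))
  have a2 := hKν (μs n) ε (fun s u v => hn2 s u (v.trans (min_le_right _ _)))
  have b1 := grid_approx' μ K hKm hK0 hK1 _ (by positivity) hKL r hrp M
  have b2 := grid_approx' (μs n) K hKm hK0 hK1 _ (by positivity) hKL r hrp M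
  have c : |∑ i ∈ Finset.range M, K ((i + 1) * r) * (μs n).real (Set.Ico ((i + 1) * r) ((i + 2) * r))
      - ∑ i ∈ Finset.range M, K ((i + 1) * r) * μ.real (Set.Ico ((i + 1) * r) ((i + 2) * r))| ≤ ε := by
    rw [← Finset.sum_sub_distrib]
    refine (Finset.abs_sum_le_sum_abs _ _).trans (le_trans (Finset.sum_le_sum fun i _ => ?_) hn4)
    rw [← mul_sub, abs_mul, abs_of_nonneg (hK0 _)]
    exact mul_le_of_le_one_left (abs_nonneg _) (hK1 _)
  rw [abs_le] at *
  constructor <;> linarith [a1.1, a1.2, a2.1, a2.2, b1.1, b1.2, b2.1, b2.2, c.1, c.2]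

/-! Random walk -/

set_option linter.unusedSectionVars false

/-- i.i.d. sequence. -/
structure IsWalk {Ω : Type*} [MeasurableSpace Ω] (P : Measure Ω) (X : ℕ → Ω → ℝ) : Prop where
  meas : ∀ i, Measurable (X i)
  indep : iIndepFun X P
  ident : ∀ i, Measure.map (X i) P = Measure.map (X 0) P

/-- partial sums -/
noncomputable def W {Ω : Type*} (X : ℕ → Ω → ℝ) (k : ℕ) (ω : Ω) : ℝ := ∑ i ∈ Finset.range k, X i ω

/-- past sigma algebra -/
@[reducible]
def Past {Ω : Type*} (X : ℕ → Ω → ℝ) (k : ℕ) : MeasurableSpace Ω :=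
  ⨆ i ∈ Set.Iio k, MeasurableSpace.comap (X i) inferInstance

/-- future sigma algebra -/
@[reducible]
def Fut {Ω : Type*} (X : ℕ → Ω → ℝ) (k : ℕ) : MeasurableSpace Ω :=
  ⨆ i ∈ Set.Ici k, MeasurableSpace.comap (X i) inferInstance

section walk
variable {Ω : Type*} [mΩ : MeasurableSpace Ω] {P : Measure Ω} [IsProbabilityMeasure P]
  {X : ℕ → Ω → ℝ}

lemma past_meas {i k : ℕ} (h : i < k) : Measurable[Past X k] (X i) := by
  refine (comap_measurable (X i)).mono ?_ le_rfl
  exact le_iSup₂ (f := fun i (_ : i ∈ Set.Iio k) => MeasurableSpace.comap (X i) inferInstance) i h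

lemma fut_meas {i k : ℕ} (h : k ≤ i) : Measurable[Fut X k] (X i) := by
  refine (comap_measurable (X i)).mono ?_ le_rfl
  exact le_iSup₂ (f := fun i (_ : i ∈ Set.Ici k) => MeasurableSpace.comap (X i) inferInstance) i h

lemma past_W {j k : ℕ} (h : j ≤ k) : Measurable[Past X k] (W X j) := by
  unfold W
  refine @Finset.measurable_fun_sum ℝ ℕ Ω _ _ _ (Past X k) _ _ fun i hi => past_meas ?_
  have := Finset.mem_range.mp hi; omega

lemma fut_sum {k : ℕ} (s : Finset ℕ) (h : ∀ i ∈ s, k ≤ i) :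
    Measurable[Fut X k] (fun ω => ∑ i ∈ s, X i ω) :=
  @Finset.measurable_fun_sum ℝ ℕ Ω _ _ _ (Fut X k) _ _ fun i hi => fut_meas (h i hi)

lemma IsWalk.indepPF (h : IsWalk P X) (k : ℕ) : Indep (Past X k) (Fut X k) P := by
  refine indep_iSup_of_disjoint (m := fun i => MeasurableSpace.comap (X i) inferInstance)
    (fun i => (h.meas i).comap_le) h.indep ?_
  rw [Set.disjoint_left]; intro i hi hi'
  simp only [Set.mem_Iio, Set.mem_Ici] at hi hi'; omega

lemma IsWalk.past_le (h : IsWalk P X) (k : ℕ) : Past X k ≤ mΩ :=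
  iSup₂_le fun i _ => (h.meas i).comap_le

lemma IsWalk.measW (h : IsWalk P X) (k : ℕ) : Measurable (W X k) :=
  Finset.measurable_fun_sum _ fun i _ => h.meas i

lemma IsWalk.prob0 (h : IsWalk P X) : IsProbabilityMeasure (P.map (X 0)) :=
  Measure.isProbabilityMeasure_map (h.meas 0).aemeasurable

lemma IsWalk.law (h : IsWalk P X) (s : Finset ℕ) :
    P.map (fun ω => ∑ i ∈ s, X i ω) = cpow (P.map (X 0)) s.card := by
  have := h.prob0
  classical
  induction s using Finset.induction_on with
  | empty => simp [cpow]
  | insert a s ha ih =>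
    have hi : IndepFun (fun ω => ∑ i ∈ s, X i ω) (X a) P := by
      have := h.indep.indepFun_finsetSum_of_notMem h.meas ha
      convert this using 1
      ext ω; simp
    have := hi.map_add_eq_map_conv_map (Finset.measurable_fun_sum _ fun i _ => h.meas i) (h.meas a)
    rw [Finset.card_insert_of_notMem ha, cpow, ← ih, ← h.ident a, ← this]
    congr 1
    ext ω; simp [Finset.sum_insert ha, add_comm]

lemma IsWalk.law_eq (h : IsWalk P X) (s : Finset ℕ) (A : Set ℝ) (hA : MeasurableSet A) :
    P.real {ω | ∑ i ∈ s, X i ω ∈ A} = P.real {ω | W X s.card ω ∈ A} := by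
  have h1 := h.law s
  have h2 := h.law (Finset.range s.card)
  rw [Finset.card_range, ← h1] at h2
  have e1 := Measure.map_apply (μ := P) (f := fun ω => ∑ i ∈ s, X i ω) (Finset.measurable_fun_sum _ fun i _ => h.meas i) hA
  have e2 := Measure.map_apply (μ := P) (h.measW s.card) hA
  rw [Measure.real, Measure.real]
  congr 1
  change P ((fun ω => ∑ i ∈ s, X i ω) ⁻¹' A) = P ((W X s.card) ⁻¹' A)
  rw [← e1, ← e2, ← h2]; rfl

lemma IsWalk.clt (h : IsWalk P X) (hm : ∫ ω, X 0 ω ∂P = 0) 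
    (hv : ∫ ω, (X 0 ω) ^ 2 ∂P = 1) (a : ℝ) :
    Tendsto (fun n : ℕ => P.real {ω | a * Real.sqrt n ≤ W X n ω}) atTop (nhds (gT a)) := by
  have hY : HasLaw (id : ℝ → ℝ) (gaussianReal 0 1) (gaussianReal 0 1) := ⟨aemeasurable_id, by simp⟩
  have hid : ∀ i, IdentDistrib (X i) (X 0) P P := fun i =>
    ⟨(h.meas i).aemeasurable, (h.meas 0).aemeasurable, h.ident i⟩
  have := tendstoInDistribution_inv_sqrt_mul_sum hY hm hv h.indep hid
  have t := this.tendsto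
  have na := gauss_noatoms
  have t2 := ProbabilityMeasure.tendsto_measure_of_null_frontier_of_tendsto' t (E := Set.Ici a) (by
    simp)
  simp only [ProbabilityMeasure.coe_mk, Measure.map_id] at t2
  have t3 := (ENNReal.tendsto_toReal (measure_ne_top _ _)).comp t2
  refine t3.congr' ?_
  filter_upwards [eventually_gt_atTop 0] with n hn
  have hs : 0 < Real.sqrt n := Real.sqrt_pos.mpr (by exact_mod_cast hn)
  simp only [Function.comp]
  rw [Measure.map_apply ((Finset.measurable_fun_sum _ fun i _ => h.meas i).const_mul _)
    measurableSet_Ici, Measure.real]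
  congr 2
  ext ω
  simp only [Set.mem_preimage, Set.mem_Ici, Set.mem_ofPred_eq, W]
  rw [le_inv_mul_iff₀ hs, mul_comm]

end walk

section walk2
variable {Ω : Type*} [mΩ : MeasurableSpace Ω] {P : Measure Ω} [IsProbabilityMeasure P]
  {X : ℕ → Ω → ℝ}

lemma sqrt_nat_atTop : Tendsto (fun n : ℕ => Real.sqrt n) atTop atTop :=
  Real.tendsto_sqrt_atTop.comp tendsto_natCast_atTop_atTop

lemma IsWalk.lemU (h : IsWalk P X) (hm : ∫ ω, X 0 ω ∂P = 0)
    (hv : ∫ ω, (X 0 ω) ^ 2 ∂P = 1) {ε η : ℝ} (hε : 0 < ε) (hη : 0 < η) :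
    ∀ᶠ n : ℕ in atTop, ∀ j, P.real {ω | η * Real.sqrt n ≤ W X j ω} ≤ 1 / 2 + ε ∧
      1 / 2 - ε ≤ P.real {ω | -(η * Real.sqrt n) ≤ W X j ω} := by
  have c := h.clt hm hv 0
  rw [gT_zero] at c
  have c1 := c.eventually (Icc_mem_nhds (show 1 / 2 - ε < 1 / 2 by linarith)
    (show 1 / 2 < 1 / 2 + ε by linarith))
  obtain ⟨K, hK⟩ := eventually_atTop.mp c1
  have hs : Tendsto (fun n : ℕ => η * Real.sqrt n) atTop atTop :=
    sqrt_nat_atTop.const_mul_atTop hη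
  have fin : ∀ j ∈ Finset.range K, ∀ᶠ n : ℕ in atTop,
      P.real {ω | η * Real.sqrt n ≤ W X j ω} ≤ 1 / 2 + ε ∧
      1 / 2 - ε ≤ P.real {ω | -(η * Real.sqrt n) ≤ W X j ω} := by
    intro j _
    have : IsProbabilityMeasure (P.map (W X j)) :=
      Measure.isProbabilityMeasure_map (h.measW j).aemeasurable
    have e : ∀ x, (P.map (W X j)).real (Set.Ici x) = P.real {ω | x ≤ W X j ω} := by
      intro x
      rw [Measure.real, Measure.map_apply (h.measW j) measurableSet_Ici]; rfl
    have t1 := (tail_tendsto (P.map (W X j))).comp hs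
    have t2 := (tail_tendsto_bot (P.map (W X j))).comp hs
    simp only [Function.comp_def, e] at t1 t2
    exact (t1.eventually (ge_mem_nhds (by linarith))).and
      (t2.eventually (le_mem_nhds (by linarith)))
  filter_upwards [(Finset.eventually_all _).mpr fin] with n hn j
  rcases lt_or_ge j K with hj | hj
  · exact hn j (Finset.mem_range.mpr hj)
  · have := hK j hj
    have hp : 0 ≤ η * Real.sqrt n := by positivity
    constructor
    · refine le_trans (measureReal_mono (fun ω hω => ?_)) this.2
      simp only [Set.mem_ofPred_eq] at *; linarith
    · refine le_trans this.1 (measureReal_mono (fun ω hω => ?_))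
      simp only [Set.mem_ofPred_eq] at *; linarith

lemma IsWalk.bigjump (h : IsWalk P X) (hL : MemLp (X 0) 2 P) {c : ℝ} (hc : 0 < c) :
    Tendsto (fun n : ℕ => P.real {ω | ∃ i < n, c * Real.sqrt n < X i ω}) atTop (nhds 0) := by
  have hms : ∀ x, MeasurableSet {ω | x < X 0 ω} := fun x => measurableSet_lt measurable_const (h.meas 0)
  have hInt : Integrable (fun ω => (X 0 ω) ^ 2) P := hL.integrable_sq
  have hs : Tendsto (fun n : ℕ => c * Real.sqrt n) atTop atTop :=
    sqrt_nat_atTop.const_mul_atTop hc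
  have dc : Tendsto (fun n : ℕ => ∫ ω, Set.indicator {ω | c * Real.sqrt n < X 0 ω}
      (fun ω => (X 0 ω) ^ 2) ω ∂P) atTop (nhds (∫ _, (0:ℝ) ∂P)) := by
    refine tendsto_integral_of_dominated_convergence (fun ω => (X 0 ω) ^ 2) ?_ hInt ?_ ?_
    · intro n
      exact (((h.meas 0).pow_const 2).indicator (hms _)).aestronglyMeasurable
    · intro n
      refine ae_of_all _ fun ω => ?_
      refine (norm_indicator_le_norm_self _ _).trans ?_
      simp
    · refine ae_of_all _ fun ω => ?_
      refine tendsto_const_nhds.congr' ?_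
      filter_upwards [hs.eventually_ge_atTop (X 0 ω)] with n hn
      rw [Set.indicator_of_notMem]
      simp only [Set.mem_ofPred_eq, not_lt]; exact hn
  rw [integral_zero] at dc
  have dc2 := dc.const_mul ((c ^ 2)⁻¹)
  rw [mul_zero] at dc2
  refine squeeze_zero (fun _ => measureReal_nonneg) (fun n => ?_) dc2
  have e : ∀ i, P.real {ω | c * Real.sqrt n < X i ω} = P.real {ω | c * Real.sqrt n < X 0 ω} := by
    intro i
    have e1 := Measure.map_apply (μ := P) (h.meas i) (measurableSet_Ioi (a := c * Real.sqrt n))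
    have e2 := Measure.map_apply (μ := P) (h.meas 0) (measurableSet_Ioi (a := c * Real.sqrt n))
    rw [h.ident i, e2] at e1
    rw [Measure.real, Measure.real]
    exact congrArg _ e1.symm
  have u : P.real {ω | ∃ i < n, c * Real.sqrt n < X i ω} ≤ n * P.real {ω | c * Real.sqrt n < X 0 ω} := by
    have : {ω | ∃ i < n, c * Real.sqrt n < X i ω} =
        ⋃ i ∈ Finset.range n, {ω | c * Real.sqrt n < X i ω} := by
      ext ω; simp
    rw [this]
    refine (measureReal_biUnion_finset_le _ _).trans ?_
    simp [e]
  refine u.trans ?_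
  rw [integral_indicator (hms _)]
  have lb : ∫ ω in {ω | c * Real.sqrt n < X 0 ω}, (c * Real.sqrt n) ^ 2 ∂P ≤
      ∫ ω in {ω | c * Real.sqrt n < X 0 ω}, (X 0 ω) ^ 2 ∂P := by
    refine setIntegral_mono_on (integrable_const _) hInt.integrableOn (hms _) fun ω hω => ?_
    have : c * Real.sqrt n < X 0 ω := hω
    have : 0 ≤ c * Real.sqrt n := by positivity
    gcongr
  rw [setIntegral_const, smul_eq_mul, mul_pow, Real.sq_sqrt (by positivity)] at lb
  rw [le_inv_mul_iff₀ (by positivity)]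
  linarith

/-- first passage event -/
def FP (X : ℕ → Ω → ℝ) (b : ℝ) (k : ℕ) : Set Ω := {ω | b ≤ W X k ω ∧ ∀ j, 1 ≤ j → j < k → W X j ω < b}

/-- passage event -/
def AP (X : ℕ → Ω → ℝ) (b : ℝ) (n : ℕ) : Set Ω := {ω | ∃ k, 1 ≤ k ∧ k ≤ n ∧ b ≤ W X k ω}

lemma FP_meas (b : ℝ) (k : ℕ) : MeasurableSet[Past X k] (FP X b k) := by
  have : FP X b k = (W X k) ⁻¹' (Set.Ici b) ∩ ⋂ j ∈ Finset.Ico 1 k, (W X j) ⁻¹' (Set.Iio b) := by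
    ext ω; simp [FP]
  rw [this]
  refine MeasurableSet.inter (past_W le_rfl measurableSet_Ici) ?_
  refine Finset.measurableSet_biInter _ fun j hj => ?_
  exact past_W (Finset.mem_Ico.mp hj).2.le measurableSet_Iio

lemma FP_disj (b : ℝ) (n : ℕ) : Set.PairwiseDisjoint (↑(Finset.Icc 1 n)) (FP X b) := by
  have key : ∀ i j, 1 ≤ i → i < j → Disjoint (FP X b i) (FP X b j) := by
    intro i j hi hij
    rw [Set.disjoint_left]; intro ω h1 h2
    have := h2.2 i hi hij
    linarith [h1.1]
  intro i hi j hj hij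
  simp only [Finset.coe_Icc, Set.mem_Icc] at hi hj
  rcases lt_or_gt_of_ne hij with h | h
  · exact key i j hi.1 h
  · exact (key j i hj.1 h).symm

lemma AP_eq (b : ℝ) (n : ℕ) : AP X b n = ⋃ k ∈ Finset.Icc 1 n, FP X b k := by
  ext ω
  simp only [AP, FP, Set.mem_ofPred_eq, Set.mem_iUnion, Finset.mem_Icc, exists_prop]
  constructor
  · intro hk
    classical
    have hs := Nat.find_spec hk
    refine ⟨Nat.find hk, ⟨hs.1, hs.2.1⟩, hs.2.2, fun j hj hlt => ?_⟩
    by_contra hc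
    exact Nat.find_min hk hlt ⟨hj, by omega, by linarith⟩
  · rintro ⟨k, ⟨h1, h2⟩, h3, -⟩
    exact ⟨k, h1, h2, h3⟩

lemma IsWalk.FP_prod (h : IsWalk P X) (b x : ℝ) {k n : ℕ} (hkn : k ≤ n) :
    P.real (FP X b k ∩ {ω | x ≤ W X n ω - W X k ω}) =
      P.real (FP X b k) * P.real {ω | x ≤ W X (n - k) ω} := by
  have e : ∀ ω, W X n ω - W X k ω = ∑ i ∈ Finset.Ico k n, X i ω := by
    intro ω; rw [Finset.sum_Ico_eq_sub _ hkn]; rfl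
  have hf : MeasurableSet[Fut X k] {ω | x ≤ W X n ω - W X k ω} := by
    simp only [e]
    exact fut_sum (X := X) (Finset.Ico k n) (fun i hi => (Finset.mem_Ico.mp hi).1)
      (measurableSet_Ici (a := x))
  have := (Indep_iff _ _ _).mp (h.indepPF k) _ _ (FP_meas b k) hf
  rw [Measure.real, this, ENNReal.toReal_mul, ← Measure.real, ← Measure.real]
  congr 1
  have l := h.law_eq (Finset.Ico k n) (Set.Ici x) measurableSet_Ici
  simp only [Nat.card_Ico, Set.mem_Ici] at l
  simp only [e, l]

lemma IsWalk.AP_real (h : IsWalk P X) (b : ℝ) (n : ℕ) :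
    P.real (AP X b n) = ∑ k ∈ Finset.Icc 1 n, P.real (FP X b k) := by
  rw [AP_eq, measureReal_biUnion_finset (FP_disj b n) fun k _ => h.past_le k _ (FP_meas b k)]

lemma IsWalk.AP_sum (h : IsWalk P X) (b x : ℝ) (n : ℕ) :
    P.real (⋃ k ∈ Finset.Icc 1 n, (FP X b k ∩ {ω | x ≤ W X n ω - W X k ω})) =
      ∑ k ∈ Finset.Icc 1 n, P.real (FP X b k) * P.real {ω | x ≤ W X (n - k) ω} := by
  rw [measureReal_biUnion_finset]
  · exact Finset.sum_congr rfl fun k hk => h.FP_prod b x (Finset.mem_Icc.mp hk).2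
  · exact (FP_disj b n).mono fun k => Set.inter_subset_left
  · intro k _
    refine (h.past_le k _ (FP_meas b k)).inter ?_
    exact measurableSet_le measurable_const ((h.measW n).sub (h.measW k))

lemma IsWalk.refl_lower (h : IsWalk P X) (b c q : ℝ) (n : ℕ)
    (hq : ∀ j, q ≤ P.real {ω | -c ≤ W X j ω}) :
    q * P.real (AP X b n) ≤ P.real {ω | b - c ≤ W X n ω} := by
  have h1 := h.AP_sum b (-c) n
  have h2 : q * P.real (AP X b n) ≤
      ∑ k ∈ Finset.Icc 1 n, P.real (FP X b k) * P.real {ω | -c ≤ W X (n - k) ω} := by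
    rw [h.AP_real, Finset.mul_sum]
    refine Finset.sum_le_sum fun k _ => ?_
    rw [mul_comm]
    exact mul_le_mul_of_nonneg_left (hq _) measureReal_nonneg
  refine h2.trans (h1 ▸ measureReal_mono ?_)
  refine Set.iUnion₂_subset fun k _ ω hω => ?_
  have a := hω.1.1
  have b := hω.2
  simp only [Set.mem_ofPred_eq] at *
  linarith

lemma IsWalk.refl_upper (h : IsWalk P X) (b c q : ℝ) (hb : 0 ≤ b) (hc : 0 ≤ c) (n : ℕ) (hn : 1 ≤ n)
    (hq : ∀ j, P.real {ω | c ≤ W X j ω} ≤ q) :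
    P.real {ω | b + 2 * c ≤ W X n ω} ≤ P.real {ω | ∃ i < n, c < X i ω} + q * P.real (AP X b n) := by
  have h1 := h.AP_sum b c n
  have h2 : ∑ k ∈ Finset.Icc 1 n, P.real (FP X b k) * P.real {ω | c ≤ W X (n - k) ω} ≤
      q * P.real (AP X b n) := by
    rw [h.AP_real, Finset.mul_sum]
    refine Finset.sum_le_sum fun k _ => ?_
    rw [mul_comm q]
    exact mul_le_mul_of_nonneg_left (hq _) measureReal_nonneg
  refine le_trans ?_ (add_le_add_right h2 _)
  rw [← h1]
  refine le_trans (measureReal_mono ?_) (measureReal_union_le _ _)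
  intro ω hω
  simp only [Set.mem_ofPred_eq] at hω
  by_cases hJ : ∃ i < n, c < X i ω
  · exact Or.inl hJ
  · right
    push Not at hJ
    have hA : ω ∈ AP X b n := ⟨n, hn, le_rfl, by linarith⟩
    rw [AP_eq] at hA
    simp only [Set.mem_iUnion, exists_prop] at hA ⊢
    obtain ⟨k, hk, hF⟩ := hA
    refine ⟨k, hk, hF, ?_⟩
    have hk' := Finset.mem_Icc.mp hk
    obtain ⟨m, rfl⟩ : ∃ m, k = m + 1 := ⟨k - 1, by omega⟩
    have hX := hJ m (by omega)
    have hW : W X (m + 1) ω = W X m ω + X m ω := by simp [W, Finset.sum_range_succ]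
    have hWm : W X m ω ≤ b := by
      rcases Nat.eq_zero_or_pos m with rfl | hm
      · simpa [W] using hb
      · exact (hF.2 m hm (by omega)).le
    simp only [Set.mem_ofPred_eq]
    linarith

lemma IsWalk.erdosKac (h : IsWalk P X) (hL : MemLp (X 0) 2 P) (hm : ∫ ω, X 0 ω ∂P = 0)
    (hv : ∫ ω, (X 0 ω) ^ 2 ∂P = 1) {a : ℝ} (ha : 0 < a) :
    Tendsto (fun n : ℕ => P.real (AP X (a * Real.sqrt n) n)) atTop (nhds (2 * gT a)) := by
  rw [Metric.tendsto_nhds]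
  intro e he
  set ε := e / 20 with hε
  have hεp : 0 < ε := by positivity
  have c1 := (h.clt hm hv (a - ε)).eventually (ge_mem_nhds (show gT (a - ε) < gT (a - ε) + ε by linarith))
  have c2 := (h.clt hm hv (a + 2 * ε)).eventually
    (le_mem_nhds (show gT (a + 2 * ε) - ε < gT (a + 2 * ε) by linarith))
  have c3 := (h.bigjump hL hεp).eventually (ge_mem_nhds hεp)
  filter_upwards [c1, c2, c3, h.lemU hm hv hεp hεp, eventually_ge_atTop 1] with n d1 d2 d3 d4 hn
  have r1 := h.refl_lower (a * Real.sqrt n) (ε * Real.sqrt n) _ n (fun j => (d4 j).2)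
  have r2 := h.refl_upper (a * Real.sqrt n) (ε * Real.sqrt n) _ (by positivity) (by positivity) n hn
    (fun j => (d4 j).1)
  rw [← sub_mul] at r1
  rw [← mul_assoc, ← add_mul] at r2
  have p1 : P.real (AP X (a * Real.sqrt n) n) ≤ 1 := measureReal_le_one
  have p0 : 0 ≤ P.real (AP X (a * Real.sqrt n) n) := measureReal_nonneg
  have l1 := gT_lip (show a - ε ≤ a by linarith)
  have l2 := gT_lip (show a ≤ a + 2 * ε by linarith)
  rw [Real.dist_eq, abs_lt]
  constructor <;> nlinarith

end walk2

section walk3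
variable {Ω : Type*} [mΩ : MeasurableSpace Ω] {P : Measure Ω} [IsProbabilityMeasure P]
  {X : ℕ → Ω → ℝ}

lemma Sh.conv {c : Measure ℝ} {t D : ℝ} (h : Sh c t D) (σ : Measure ℝ) [IsProbabilityMeasure c]
    [IsProbabilityMeasure σ] : Sh (c ∗ σ) t D := by
  intro φ hm h0 h1
  rw [integral_conv_unit c σ φ hm h0 h1, integral_conv_unit c σ (fun y => φ (y + t))
    (hm.comp (measurable_add_const t)) (fun _ => h0 _) (fun _ => h1 _)]
  have I : ∀ t, Integrable (fun y => ∫ x, φ (x + y + t) ∂c) σ := by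
    intro t
    have hs : StronglyMeasurable (fun p : ℝ × ℝ => φ (p.2 + p.1 + t)) :=
      (hm.comp (by fun_prop)).stronglyMeasurable
    refine integrable_of_unit _ (hs.integral_prod_right).measurable
      (fun _ => integral_nonneg fun _ => h0 _) (fun s => ?_)
    have := integral_mono (integrable_of_unit c (u := fun x => φ (x + s + t)) (hm.comp (by fun_prop))
      (fun _ => h0 _) (fun _ => h1 _)) (integrable_const (1:ℝ)) (fun x => h1 (x + s + t))
    simpa using this
  have I0 := I 0
  simp only [add_zero] at I0
  rw [← integral_sub I0 (I t)]
  have : ∀ y, (∫ x, φ (x + y) ∂c) - ∫ x, φ (x + y + t) ∂c ≤ D := by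
    intro y
    have := h (fun x => φ (x + y)) (hm.comp (measurable_add_const y)) (fun _ => h0 _) (fun _ => h1 _)
    simpa only [add_right_comm] using this
  have := integral_mono (I0.sub (I t)) (integrable_const D) this
  simpa using this

/-- maximum -/
noncomputable def Mx (X : ℕ → Ω → ℝ) (n : ℕ) (ω : Ω) : ℝ :=
  (Finset.Icc 1 (max n 1)).sup' (Finset.nonempty_Icc.mpr (le_max_right _ _)) (fun k => W X k ω)

/-- maximum over the future -/
noncomputable def Rx (X : ℕ → Ω → ℝ) (k n : ℕ) (ω : Ω) : ℝ :=
  (Finset.Icc k (max n k)).sup' (Finset.nonempty_Icc.mpr (le_max_right _ _))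
    (fun j => ∑ i ∈ Finset.Ico k j, X i ω)

lemma le_Mx {n : ℕ} (hn : 1 ≤ n) (b : ℝ) (ω : Ω) : b ≤ Mx X n ω ↔ ω ∈ AP X b n := by
  rw [Mx, Finset.le_sup'_iff]
  simp [AP, max_eq_left hn, and_assoc]

lemma IsWalk.measMx (h : IsWalk P X) (n : ℕ) : Measurable (Mx X n) := by
  have := Finset.measurable_sup' (s := Finset.Icc 1 (max n 1))
    (Finset.nonempty_Icc.mpr (le_max_right _ _)) (f := W X) (fun k _ => h.measW k)
  convert this using 1
  ext ω; simp [Mx, Finset.sup'_apply]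

lemma measRx (k n : ℕ) : Measurable[Fut X k] (Rx X k n) := by
  have := @Finset.measurable_sup' ℝ _ Ω (Fut X k) _ _ ℕ (Finset.Icc k (max n k))
    (Finset.nonempty_Icc.mpr (le_max_right _ _)) (fun j ω => ∑ i ∈ Finset.Ico k j, X i ω)
    (fun j _ => fut_sum (Finset.Ico k j) (fun i hi => (Finset.mem_Ico.mp hi).1))
  convert this using 1
  ext ω; simp [Rx, Finset.sup'_apply]

lemma IsWalk.fut_le (h : IsWalk P X) (k : ℕ) : Fut X k ≤ mΩ :=
  iSup₂_le fun i _ => (h.meas i).comap_le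

lemma Mx_eq {k n : ℕ} (hk : 1 ≤ k) (hkn : k ≤ n) (b : ℝ) (ω : Ω) (h1 : ω ∉ AP X b k)
    (h2 : ω ∈ AP X b n) : Mx X n ω = W X k ω + Rx X k n ω := by
  have e : ∀ j, k ≤ j → W X j ω = W X k ω + ∑ i ∈ Finset.Ico k j, X i ω := by
    intro j hj; rw [Finset.sum_Ico_eq_sub _ hj]; simp [W]
  apply le_antisymm
  · obtain ⟨j, hj, hje⟩ := Finset.exists_mem_eq_sup' (Finset.nonempty_Icc.mpr (le_max_right n 1))
      (fun k => W X k ω)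
    have hM : Mx X n ω = W X j ω := hje
    have hb : b ≤ W X j ω := by rw [← hM]; exact (le_Mx (hk.trans hkn) b ω).mpr h2
    rw [Finset.mem_Icc, max_eq_left (hk.trans hkn)] at hj
    have hkj : k ≤ j := by
      by_contra hc
      exact h1 ⟨j, hj.1, by omega, hb⟩
    rw [hM, e j hkj]
    gcongr
    exact Finset.le_sup' (fun j => ∑ i ∈ Finset.Ico k j, X i ω)
      (Finset.mem_Icc.mpr ⟨hkj, hj.2.trans (le_max_left _ _)⟩)
  · obtain ⟨j, hj, hje⟩ := Finset.exists_mem_eq_sup' (Finset.nonempty_Icc.mpr (le_max_right n k))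
      (fun j => ∑ i ∈ Finset.Ico k j, X i ω)
    have hR : Rx X k n ω = ∑ i ∈ Finset.Ico k j, X i ω := hje
    rw [Finset.mem_Icc, max_eq_left hkn] at hj
    rw [hR, ← e j hj.1]
    exact Finset.le_sup' (fun k => W X k ω)
      (Finset.mem_Icc.mpr ⟨hk.trans hj.1, hj.2.trans (le_max_left _ _)⟩)

lemma IsWalk.ShT (h : IsWalk P X) {k : ℕ} (n : ℕ) {t D : ℝ} (hD : Sh (cpow (P.map (X 0)) k) t D) :
    Sh (P.map (fun ω => W X k ω + Rx X k n ω)) t D := by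
  have := h.prob0
  have hR : Measurable (Rx X k n) := (measRx k n).mono (h.fut_le k) le_rfl
  have hi : IndepFun (W X k) (Rx X k n) P := by
    rw [IndepFun_iff_Indep]
    exact indep_of_indep_of_le_left (indep_of_indep_of_le_right (h.indepPF k)
      (measRx k n).comap_le) (past_W le_rfl).comap_le
  have e := hi.map_add_eq_map_conv_map (h.measW k) hR
  have e2 : P.map (W X k) = cpow (P.map (X 0)) k := by
    have := h.law (Finset.range k)
    rwa [Finset.card_range] at this
  have : IsProbabilityMeasure (P.map (Rx X k n)) := Measure.isProbabilityMeasure_map hR.aemeasurable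
  change Sh (P.map (W X k + Rx X k n)) t D
  rw [e, e2]
  exact hD.conv _

lemma IsWalk.ShMx (h : IsWalk P X) {k n : ℕ} (hk : 1 ≤ k) (hkn : k ≤ n) (b : ℝ) {s D q : ℝ}
    (hD : Sh (cpow (P.map (X 0)) k) (s * Real.sqrt n) D)
    (hq : P.real (AP X b k) + (1 - P.real (AP X b n)) ≤ q) :
    Sh (P.map (fun ω => Mx X n ω / Real.sqrt n)) s (D + 2 * q) := by
  have hR : Measurable (Rx X k n) := (measRx k n).mono (h.fut_le k) le_rfl
  have hM := h.measMx n
  have hW := h.measW k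
  have hsn : 0 < Real.sqrt n := Real.sqrt_pos.mpr (by exact_mod_cast (by omega : 0 < n))
  have mA : ∀ n, MeasurableSet (AP X b n) := by
    intro n
    rw [AP_eq]
    exact Finset.measurableSet_biUnion _ fun k _ => h.past_le k _ (FP_meas b k)
  set B := AP X b k ∪ (AP X b n)ᶜ with hB
  have mB : MeasurableSet B := (mA k).union (mA n).compl
  have hBq : P.real B ≤ q := by
    refine (measureReal_union_le _ _).trans ?_
    rw [probReal_compl_eq_one_sub (mA n)]; exact hq
  intro φ hm h0 h1
  have T := h.ShT n hD (fun x => φ (x / Real.sqrt n)) (hm.comp (measurable_id.div_const _))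
    (fun _ => h0 _) (fun _ => h1 _)
  have hWR : Measurable (fun ω => W X k ω + Rx X k n ω) := hW.add hR
  rw [integral_map (f := fun y => φ (y / Real.sqrt n)) hWR.aemeasurable (hm.comp (measurable_id.div_const _)).aestronglyMeasurable,
    integral_map (f := fun y => φ ((y + s * Real.sqrt n) / Real.sqrt n)) hWR.aemeasurable
      (hm.comp (by fun_prop)).aestronglyMeasurable] at T
  rw [integral_map (hM.div_const _).aemeasurable hm.aestronglyMeasurable,
    integral_map (f := fun y => φ (y + s)) (hM.div_const _).aemeasurable
      (hm.comp (by fun_prop)).aestronglyMeasurable]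
  have key : ∀ ψ : ℝ → ℝ, Measurable ψ → (∀ x, 0 ≤ ψ x) → (∀ x, ψ x ≤ 1) →
      |∫ ω, ψ (Mx X n ω) ∂P - ∫ ω, ψ (W X k ω + Rx X k n ω) ∂P| ≤ q := by
    intro ψ a b0 c
    have I1 := integrable_of_unit P (a.comp hM) (fun _ => b0 _) (fun _ => c _)
    have I2 := integrable_of_unit P (a.comp hWR) (fun _ => b0 _) (fun _ => c _)
    simp only [Function.comp_def] at I1 I2
    rw [← integral_sub I1 I2]
    refine (abs_integral_le_integral_abs).trans (le_trans ?_ hBq)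
    have : ∫ ω, B.indicator (fun _ => (1:ℝ)) ω ∂P = P.real B := by
      rw [integral_indicator mB]; simp
    rw [← this]
    refine integral_mono (I1.sub I2).abs ((integrable_const (1:ℝ)).indicator mB) fun ω => ?_
    by_cases hω : ω ∈ B
    · rw [Set.indicator_of_mem hω]
      rw [abs_le]
      constructor <;> linarith [b0 (Mx X n ω), b0 (W X k ω + Rx X k n ω), c (Mx X n ω), c (W X k ω + Rx X k n ω)]
    · rw [Set.indicator_of_notMem hω]
      simp only [hB, Set.mem_union, Set.mem_compl_iff, not_or, not_not] at hω
      simp [Mx_eq hk hkn b ω hω.1 hω.2]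
  have k1 := key (fun x => φ (x / Real.sqrt n)) (hm.comp (measurable_id.div_const _))
    (fun _ => h0 _) (fun _ => h1 _)
  have k2 := key (fun x => φ (x / Real.sqrt n + s)) (hm.comp (by fun_prop))
    (fun _ => h0 _) (fun _ => h1 _)
  have e : ∀ y : ℝ, (y + s * Real.sqrt n) / Real.sqrt n = y / Real.sqrt n + s := by
    intro y; field_simp
  simp only [e] at T
  rw [abs_le] at k1 k2
  linarith [k1.2, k2.1]

lemma IsWalk.smooth (h : IsWalk P X) (hac : P.map (X 0) ≪ volume)
    (hL : MemLp (X 0) 2 P) (hm : ∫ ω, X 0 ω ∂P = 0)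
    (hv : ∫ ω, (X 0 ω) ^ 2 ∂P = 1) : ∀ ε > 0, ∃ δ > 0, ∀ᶠ n in atTop, ∀ s, 0 ≤ s → s ≤ δ →
      Sh (P.map (fun ω => Mx X n ω / Real.sqrt n)) s ε := by
  intro ε hε
  have := h.prob0
  obtain ⟨C, hC, hCk⟩ := Sh_cpow_bound (P.map (X 0)) hac
  set η := ε / 32 with hη
  have hηp : 0 < η := by positivity
  obtain ⟨B, hBp, hB⟩ : ∃ B > 0, gT B ≤ ε / 32 :=
    ((eventually_gt_atTop 0).and ((tail_tendsto (gaussianReal 0 1)).eventually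
      (ge_mem_nhds (by positivity : (0:ℝ) < ε / 32)))).exists
  obtain ⟨m, hm1, hmB⟩ : ∃ m : ℕ, 1 ≤ m ∧ B ≤ η * Real.sqrt m :=
    ((eventually_ge_atTop 1).and ((sqrt_nat_atTop.const_mul_atTop hηp).eventually_ge_atTop B)).exists
  have hdiv : Tendsto (fun n : ℕ => n / m) atTop atTop := Nat.tendsto_div_const_atTop (by omega)
  have hsm : 0 < Real.sqrt (2 * m) := Real.sqrt_pos.mpr (by positivity)
  refine ⟨ε / (4 * C * Real.sqrt (2 * m)), by positivity, ?_⟩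
  have e1 := (h.erdosKac hL hm hv hηp).eventually (le_mem_nhds
    (show 2 * gT η - ε / 16 < 2 * gT η by linarith))
  have e2 := hdiv.eventually ((h.erdosKac hL hm hv hBp).eventually (ge_mem_nhds
    (show 2 * gT B < 2 * gT B + ε / 16 by linarith)))
  have e3 := hdiv.eventually (sqrt_nat_atTop.eventually_ge_atTop (4 * C / ε))
  filter_upwards [e1, e2, e3, eventually_ge_atTop m] with n d1 d2 d3 hn s hs0 hsδ
  set k := n / m with hk
  have hk1 : 1 ≤ k := (Nat.one_le_div_iff (by omega)).mpr hn
  have hkn : k ≤ n := Nat.div_le_self _ _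
  have hmk : m * k ≤ n := Nat.mul_div_le n m
  have hnk : n ≤ 2 * m * k := by
    have : n < m * (k + 1) := Nat.lt_mul_div_succ n (by omega)
    nlinarith
  have hsk : 0 < Real.sqrt k := Real.sqrt_pos.mpr (by exact_mod_cast hk1)
  have q1 : P.real (AP X (η * Real.sqrt n) k) ≤ ε / 8 := by
    refine (measureReal_mono (s₂ := AP X (B * Real.sqrt k) k) ?_).trans (d2.trans (by linarith))
    rintro ω ⟨j, u, v, w⟩
    refine ⟨j, u, v, le_trans ?_ w⟩
    have : Real.sqrt m * Real.sqrt k ≤ Real.sqrt n := by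
      rw [← Real.sqrt_mul (by positivity)]
      exact Real.sqrt_le_sqrt (by exact_mod_cast hmk)
    calc B * Real.sqrt k ≤ η * Real.sqrt m * Real.sqrt k := by gcongr
      _ = η * (Real.sqrt m * Real.sqrt k) := by ring
      _ ≤ _ := by gcongr
  have q2 : 1 - P.real (AP X (η * Real.sqrt n) n) ≤ ε / 8 := by
    have := gT_lip hηp.le
    rw [gT_zero] at this
    linarith
  refine (h.ShMx hk1 hkn (η * Real.sqrt n) (q := ε / 4)
    (hCk k hk1 (s * Real.sqrt n) (by positivity)) (by linarith)).mono ?_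
  have hsn : Real.sqrt n ≤ Real.sqrt (2 * m) * Real.sqrt k := by
    rw [← Real.sqrt_mul (by positivity)]
    exact Real.sqrt_le_sqrt (by exact_mod_cast hnk)
  have f1 : C * (s * Real.sqrt n) ≤ ε / 4 * Real.sqrt k := by
    calc C * (s * Real.sqrt n) ≤ C * (ε / (4 * C * Real.sqrt (2 * m)) * (Real.sqrt (2 * m) * Real.sqrt k)) := by
          gcongr
      _ = _ := by field_simp
  have f2 : C ≤ ε / 4 * Real.sqrt k := by
    rw [div_le_iff₀ hε] at d3
    linarith
  have : C * (s * Real.sqrt n + 1) / Real.sqrt k ≤ ε / 2 := by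
    rw [div_le_iff₀ hsk]; linarith
  linarith

end walk3

/-- Total variation version of the Erdős–Kac theorem: for i.i.d. `X i` with a
Lebesgue density, mean `0` and variance `1`, the law of `S̄ n / √n` converges to
the one-sided standard normal law in total variation. -/
theorem stmt1 {Ω : Type*} [MeasureSpace Ω] [IsProbabilityMeasure (ℙ : Measure Ω)]
    (X : ℕ → Ω → ℝ) (hmeas : ∀ i, Measurable (X i))
    (hindep : iIndepFun X ℙ)
    (hident : ∀ i, Measure.map (X i) ℙ = Measure.map (X 0) ℙ)
    (hdensity : Measure.map (X 0) ℙ ≪ volume)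
    (hL2 : MemLp (X 0) 2 ℙ)
    (hmean : ∫ ω, X 0 ω ∂ℙ = 0)
    (hvar : ∫ ω, (X 0 ω) ^ 2 ∂ℙ = 1)
    (Sbar : ℕ → Ω → ℝ)
    (hSbar : ∀ n, ∀ hn : 1 ≤ n, ∀ ω, Sbar n ω =
      (Finset.Icc 1 n).sup' (Finset.nonempty_Icc.mpr hn)
        (fun k => ∑ i ∈ Finset.range k, X i ω)) :
    Tendsto (fun n => dTV (Measure.map (fun ω => Sbar n ω / Real.sqrt n) ℙ) halfNormal)
      atTop (nhds 0) := by
  have h : IsWalk (ℙ : Measure Ω) X := ⟨hmeas, hindep, hident⟩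
  have hp : ∀ n : ℕ, IsProbabilityMeasure
      (Measure.map (fun ω => Mx X n ω / Real.sqrt n) (ℙ : Measure Ω)) := fun n =>
    Measure.isProbabilityMeasure_map ((h.measMx n).div_const _).aemeasurable
  have key := smoothing (fun n : ℕ => Measure.map (fun ω => Mx X n ω / Real.sqrt n) (ℙ : Measure Ω))
    halfNormal ?_ ?_ ?_ (h.smooth hdensity hL2 hmean hvar)
  · rw [Metric.tendsto_nhds]
    intro e he
    filter_upwards [key (e / 20) (by positivity), eventually_ge_atTop 1] with n hn hn1
    have hMS : Sbar n = Mx X n := by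
      ext ω
      rw [hSbar n hn1 ω]
      simp only [Mx, max_eq_left hn1, W]
    have hnn : 0 ≤ dTV (Measure.map (fun ω => Mx X n ω / Real.sqrt n) (ℙ : Measure Ω)) halfNormal :=
      Real.iSup_nonneg fun _ => abs_nonneg _
    rw [hMS, Real.dist_eq, sub_zero, abs_of_nonneg hnn]
    have : dTV (Measure.map (fun ω => Mx X n ω / Real.sqrt n) (ℙ : Measure Ω)) halfNormal ≤ e / 2 := by
      refine Real.iSup_le (fun A => ?_) (by positivity)
      have := hn (A.1.indicator fun _ => (1:ℝ)) (measurable_const.indicator A.2)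
        (fun x => Set.indicator_nonneg (fun _ _ => zero_le_one) x)
        (fun x => Set.indicator_le_self' (fun _ _ => zero_le_one) x)
      rw [integral_indicator A.2, integral_indicator A.2] at this
      simp only [setIntegral_const, smul_eq_mul, mul_one, Measure.real] at this
      linarith
    linarith
  · intro a ha
    rw [halfNormal_tail ha]
    refine (h.erdosKac hL2 hmean hvar ha).congr' ?_
    filter_upwards [eventually_ge_atTop 1] with n hn
    have hs : 0 < Real.sqrt n := Real.sqrt_pos.mpr (by exact_mod_cast hn)
    rw [Measure.real, Measure.real,
      Measure.map_apply ((h.measMx n).div_const _) measurableSet_Ici]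
    congr 2
    ext ω
    rw [Set.mem_preimage, Set.mem_Ici, le_div_iff₀ hs, le_Mx hn]
  · intro ε hε
    refine ⟨ε / 2, by positivity, fun r hr hr2 => ?_⟩
    have := gT_lip hr.le
    rw [gT_zero] at this
    rw [halfNormal_tail hr]
    linarith
  · intro ε hε
    exact ⟨ε / 2, by positivity, fun s hs hs2 => (Sh_halfNormal hs).mono (by linarith)⟩
end

section
/- Let X₁, X₂, … be i.i.d. real random variables with a Lebesgue density, mean 0 and variance 1, and let S̄_n := max_{1≤k≤n} (X₁+…+X_k). Then D₊(S̄_{n₀} | |Z|) < ∞ for some n₀ ∈ ℕ if and only if D₊(S̄_1 | |Z|) = D₊(X₁ | |Z|) < ∞. -/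
open MeasureTheory ProbabilityTheory Filter
open scoped ENNReal Classical

/-- The Kullback–Leibler divergence (relative entropy) `D(μ | ν)` of two measures
on `ℝ`, with values in `[0,∞]`: it is `∫ log (dμ/dν) dμ` when `μ ≪ ν` and the
log-likelihood ratio is integrable, and `∞` otherwise. -/
noncomputable def KL (μ ν : Measure ℝ) : ℝ≥0∞ :=
  if μ ≪ ν ∧ Integrable (llr μ ν) μ then ENNReal.ofReal (∫ x, llr μ ν x ∂μ) else ⊤

/-- `D₊(U | |Z|)`: the relative entropy of `U` conditioned to be positive with
respect to the one-sided standard normal law. -/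
noncomputable def Dplus {Ω : Type*} [MeasurableSpace Ω] (μ : Measure Ω) (U : Ω → ℝ) :
    ℝ≥0∞ :=
  KL ((Measure.map U μ)[|Set.Ioi 0]) halfNormal

lemma KL_lt_top_of_le {μ ν γ : Measure ℝ} [IsFiniteMeasure μ] [IsFiniteMeasure ν]
    [IsFiniteMeasure γ] {C : ℝ≥0∞} (hC : C ≠ ⊤) (hle : μ ≤ C • ν) (h : KL ν γ < ⊤) :
    KL μ γ < ⊤ := by
  unfold KL at h ⊢
  by_cases hν : ν ≪ γ ∧ Integrable (llr ν γ) ν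
  swap
  · simp [hν] at h
  obtain ⟨hac, hint⟩ := hν
  have hμν : μ ≪ ν := (Measure.absolutelyContinuous_of_le hle).trans
    (Measure.smul_absolutelyContinuous)
  have hμ : μ ≪ γ := hμν.trans hac
  have hrn : ∀ᵐ x ∂γ, μ.rnDeriv γ x ≤ C * ν.rnDeriv γ x := by
    apply ae_le_of_forall_setLIntegral_le_of_sigmaFinite (Measure.measurable_rnDeriv _ _)
    intro s hs _
    rw [Measure.setLIntegral_rnDeriv hμ, lintegral_const_mul _ (Measure.measurable_rnDeriv _ _),
      Measure.setLIntegral_rnDeriv hac]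
    exact hle s
  have hg := (integrable_rnDeriv_mul_log_iff hac).2 hint
  have hg1 : Integrable (fun x => (ν.rnDeriv γ x).toReal) γ := Measure.integrable_toReal_rnDeriv
  have hf : Integrable (fun x => (μ.rnDeriv γ x).toReal * Real.log (μ.rnDeriv γ x).toReal) γ := by
    have hdom : Integrable (fun x => 1 + C.toReal * |(ν.rnDeriv γ x).toReal *
        Real.log (ν.rnDeriv γ x).toReal| +
        C.toReal * |Real.log C.toReal| * (ν.rnDeriv γ x).toReal) γ :=
      ((integrable_const 1).add (hg.abs.const_mul _)).add (hg1.const_mul _)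
    refine hdom.mono' (by fun_prop) ?_
    filter_upwards [hrn, ν.rnDeriv_lt_top γ] with x hx hxt
    have hx' : (μ.rnDeriv γ x).toReal ≤ C.toReal * (ν.rnDeriv γ x).toReal := by
      rw [← ENNReal.toReal_mul]
      exact ENNReal.toReal_mono (ENNReal.mul_ne_top hC hxt.ne) hx
    have hf0 : 0 ≤ (μ.rnDeriv γ x).toReal := ENNReal.toReal_nonneg
    have hg0 : 0 ≤ (ν.rnDeriv γ x).toReal := ENNReal.toReal_nonneg
    have hc0 : 0 ≤ C.toReal := ENNReal.toReal_nonneg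
    generalize (μ.rnDeriv γ x).toReal = f at *
    generalize (ν.rnDeriv γ x).toReal = g at *
    generalize C.toReal = c at *
    rw [Real.norm_eq_abs]
    have hA : 0 ≤ c * |g * Real.log g| := by positivity
    have hB : 0 ≤ c * |Real.log c| * g := by positivity
    rcases le_total f 1 with h1 | h1
    · have : |f * Real.log f| ≤ 1 := by
        rcases hf0.eq_or_lt with h0 | h0
        · simp [← h0]
        · rw [mul_comm]; exact (Real.abs_log_mul_self_lt f h0 h1).le
      linarith
    · have hl : 0 ≤ Real.log f := Real.log_nonneg h1
      rw [abs_of_nonneg (by positivity)]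
      have hcg : 0 < c * g := by linarith
      have hcne : c ≠ 0 := by rintro rfl; simp at hcg
      have hgne : g ≠ 0 := by rintro rfl; simp at hcg
      have h2 : f * Real.log f ≤ (c * g) * Real.log (c * g) := by
        apply mul_le_mul hx' (Real.log_le_log (by linarith) hx') hl hcg.le
      rw [Real.log_mul hcne hgne] at h2
      have h3 : c * (g * Real.log g) ≤ c * |g * Real.log g| :=
        mul_le_mul_of_nonneg_left (le_abs_self _) hc0
      have h4 : c * g * Real.log c ≤ c * g * |Real.log c| :=
        mul_le_mul_of_nonneg_left (le_abs_self _) hcg.le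
      nlinarith
  rw [if_pos ⟨hμ, (integrable_rnDeriv_mul_log_iff hμ).1 hf⟩]
  exact ENNReal.ofReal_lt_top

lemma cond_le_smul_cond {μ ν : Measure ℝ} [IsFiniteMeasure μ] [IsFiniteMeasure ν]
    {K : ℝ≥0∞} (hK : K ≠ ⊤) (hle : μ ≤ K • ν) (s : Set ℝ) :
    ∃ C : ℝ≥0∞, C ≠ ⊤ ∧ μ[|s] ≤ C • ν[|s] := by
  by_cases h0 : μ s = 0
  · exact ⟨0, by simp, by rw [cond_eq_zero_of_meas_eq_zero h0]; simp⟩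
  have hν0 : ν s ≠ 0 := by
    intro h
    apply h0
    have := hle s
    simpa [h] using this
  refine ⟨(μ s)⁻¹ * K * ν s, by finiteness, ?_⟩
  unfold ProbabilityTheory.cond
  rw [smul_smul, mul_assoc, ENNReal.mul_inv_cancel hν0 (by finiteness), mul_one, mul_smul]
  gcongr
  rw [← Measure.restrict_smul]
  exact Measure.restrict_mono le_rfl hle

/-- `D₊(S̄ n₀ | |Z|) < ∞` for some `n₀ ≥ 1` iff it holds for `n₀ = 1`, i.e. iff
`D₊(X 0 | |Z|) < ∞` (note `S̄ 1 = X 0`, so `D₊(S̄ 1 | |Z|) = D₊(X 0 | |Z|)`). -/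
theorem stmt2 {Ω : Type*} [MeasureSpace Ω] [IsProbabilityMeasure (ℙ : Measure Ω)]
    (X : ℕ → Ω → ℝ) (hmeas : ∀ i, Measurable (X i))
    (hindep : iIndepFun X ℙ)
    (hident : ∀ i, Measure.map (X i) ℙ = Measure.map (X 0) ℙ)
    (hdensity : Measure.map (X 0) ℙ ≪ volume)
    (hL2 : MemLp (X 0) 2 ℙ)
    (hmean : ∫ ω, X 0 ω ∂ℙ = 0)
    (hvar : ∫ ω, (X 0 ω) ^ 2 ∂ℙ = 1)
    (Sbar : ℕ → Ω → ℝ)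
    (hSbar : ∀ n, ∀ hn : 1 ≤ n, ∀ ω, Sbar n ω =
      (Finset.Icc 1 n).sup' (Finset.nonempty_Icc.mpr hn)
        (fun k => ∑ i ∈ Finset.range k, X i ω)) :
    Dplus ℙ (Sbar 1) = Dplus ℙ (X 0) ∧
      ((∃ n₀, 1 ≤ n₀ ∧ Dplus ℙ (Sbar n₀) < ⊤) ↔ Dplus ℙ (X 0) < ⊤) := by
  have h1 : Sbar 1 = X 0 := by
    funext ω
    rw [hSbar 1 le_rfl]
    simp
  refine ⟨by rw [h1], ⟨?_, fun h => ⟨1, le_rfl, by rwa [h1]⟩⟩⟩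
  rintro ⟨n, hn, h⟩
  have hq : Measure.map (X 0) ℙ (Set.Iic 0) ≠ 0 := by
    intro h0
    rw [Measure.map_apply (hmeas 0) measurableSet_Iic] at h0
    have hpos : ∀ᵐ ω, 0 < X 0 ω := by
      rw [ae_iff]
      convert h0 using 2
      ext ω; simp
    have hz := (integral_eq_zero_iff_of_nonneg_ae (hpos.mono fun ω h => h.le)
      (hL2.integrable (by norm_num))).1 hmean
    have hF : ∀ᵐ ω : Ω, False := by
      filter_upwards [hpos, hz] with ω h1 h2
      simp at h2
      linarith
    simp at hF
    exact IsProbabilityMeasure.ne_zero _ hF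
  have hSm : Measurable (Sbar n) := by
    have : Sbar n = (Finset.Icc 1 n).sup' (Finset.nonempty_Icc.mpr hn)
        (fun k ω => ∑ i ∈ Finset.range k, X i ω) := by
      funext ω
      rw [hSbar n hn, Finset.sup'_apply]
    rw [this]
    exact Finset.measurable_sup' _ fun k _ => Finset.measurable_sum _ fun i _ => hmeas i
  obtain ⟨k, rfl⟩ : ∃ k, n = k + 1 := ⟨n - 1, by omega⟩
  set q := Measure.map (X 0) ℙ (Set.Iic 0) with hqdef
  have hqt : q ≠ ⊤ := by
    have := Measure.isProbabilityMeasure_map (μ := (ℙ : Measure Ω)) (hmeas 0).aemeasurable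
    exact measure_ne_top _ _
  have hle : Measure.map (X 0) ℙ ≤ (q ^ k)⁻¹ • Measure.map (Sbar (k + 1)) ℙ := by
    rw [Measure.le_iff]
    intro A hA
    have hind := hindep.measure_inter_preimage_eq_mul (Finset.range (k + 1))
      (sets := fun i => if i = 0 then A else Set.Iic 0)
      (fun i _ => by split_ifs <;> [exact hA; exact measurableSet_Iic])
    rw [Finset.prod_range_succ'] at hind
    simp only [Nat.add_eq_zero_iff, one_ne_zero, and_false, if_false, if_true] at hind
    have hprod : ∀ i, ℙ (X (i + 1) ⁻¹' Set.Iic 0) = q := by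
      intro i
      rw [← Measure.map_apply (hmeas _) measurableSet_Iic, hident]
    simp only [hprod, Finset.prod_const, Finset.card_range] at hind
    rw [← Measure.map_apply (hmeas 0) hA] at hind
    have hsub : q ^ k * Measure.map (X 0) ℙ A ≤ Measure.map (Sbar (k + 1)) ℙ A := by
      rw [← hind, Measure.map_apply hSm hA]
      apply measure_mono
      intro ω hω
      simp only [Set.mem_iInter, Finset.mem_range, Set.mem_preimage] at hω
      have hA0 : X 0 ω ∈ A := by simpa using hω 0 (by omega)
      have : Sbar (k + 1) ω = X 0 ω := by
        rw [hSbar _ hn]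
        apply le_antisymm
        · apply Finset.sup'_le
          intro j hj
          rw [Finset.mem_Icc] at hj
          obtain ⟨l, rfl⟩ : ∃ l, j = l + 1 := ⟨j - 1, by omega⟩
          rw [Finset.sum_range_succ']
          have : ∑ i ∈ Finset.range l, X (i + 1) ω ≤ 0 := by
            apply Finset.sum_nonpos
            intro i hi
            rw [Finset.mem_range] at hi
            simpa using hω (i + 1) (by omega)
          linarith
        · refine le_trans ?_ (Finset.le_sup' _ (Finset.mem_Icc.mpr ⟨le_rfl, hn⟩))
          simp
      simpa [this] using hA0
    rw [Measure.smul_apply, smul_eq_mul]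
    have hqk : q ^ k ≠ 0 := pow_ne_zero _ hq
    have hqkt : q ^ k ≠ ⊤ := ENNReal.pow_ne_top hqt
    calc Measure.map (X 0) ℙ A = (q ^ k)⁻¹ * (q ^ k * Measure.map (X 0) ℙ A) := by
          rw [← mul_assoc, ENNReal.inv_mul_cancel hqk hqkt, one_mul]
      _ ≤ _ := by gcongr
  obtain ⟨C, hC, hCle⟩ := cond_le_smul_cond
    (ENNReal.inv_ne_top.2 (pow_ne_zero k hq)) hle (Set.Ioi 0)
  have : IsFiniteMeasure halfNormal := by unfold halfNormal; infer_instance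
  exact KL_lt_top_of_le hC hCle h
end

section
/- Let ψ be a positive probability density on (0,∞), let α₁, …, α_n be positive real numbers, and let f₁, …, f_n be non-negative measurable functions with ∫₀^∞ f_k(x) dx < ∞ for k = 1, …, n. Then D(Σ_{k=1}^n α_k f_k | ψ) ≤ Σ_{k=1}^n α_k·D(f_k | ψ) + (log Σ_{k=1}^n α_k)·Σ_{k=1}^n α_k·∫₀^∞ f_k(x) dx. -/
open MeasureTheory Set
open scoped ENNReal

/-- `L x = x * log x` (with `L 0 = 0`, automatic since `Real.log 0 = 0`). -/
noncomputable def L (x : ℝ) : ℝ := x * Real.log x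

/-- The relative entropy `D(f | ψ) = ∫₀^∞ L (f x / ψ x) * ψ x dx`, with values in
`(-∞, ∞]`, realized in `EReal`.  Since `L t ≥ -e⁻¹` for `t ≥ 0`, for a probability
density `ψ` on `(0,∞)` the integrand shifted by `e⁻¹ * ψ` is nonnegative, so this
is faithfully computed by a Lebesgue integral shifted back by `e⁻¹`. -/
noncomputable def relEnt (f ψ : ℝ → ℝ) : EReal :=
  ((∫⁻ x in Ioi (0 : ℝ),
      ENNReal.ofReal (L (f x / ψ x) * ψ x + Real.exp (-1) * ψ x) : ℝ≥0∞) : EReal)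
    - ((Real.exp (-1) : ℝ) : EReal)


lemma L_lower (x : ℝ) (hx : 0 ≤ x) : 0 ≤ L x + Real.exp (-1) := by
  rcases hx.eq_or_lt with rfl | hx
  · simp [L, Real.exp_nonneg]
  · have h := Real.add_one_le_exp (-1 - Real.log x)
    rw [Real.exp_sub, Real.exp_log hx, le_div_iff₀ hx] at h
    unfold L
    nlinarith

lemma L_meas : Measurable L := by
  unfold L
  exact measurable_id.mul Real.measurable_log

lemma L_jensen (n : ℕ) (α g : Fin n → ℝ) (hα : ∀ k, 0 < α k) (hg : ∀ k, 0 ≤ g k) :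
    L (∑ k, α k * g k) ≤ ∑ k, α k * L (g k) + Real.log (∑ k, α k) * ∑ k, α k * g k := by
  rcases Nat.eq_zero_or_pos n with rfl | hn
  · simp [L]
  have : Nonempty (Fin n) := ⟨⟨0, hn⟩⟩
  have hA : 0 < ∑ k, α k := Finset.sum_pos (fun k _ => hα k) Finset.univ_nonempty
  set A := ∑ k, α k with hAdef
  have h := Real.convexOn_mul_log.map_sum_le (t := Finset.univ) (w := fun k => α k / A) (p := g)
    (fun k _ => (div_pos (hα k) hA).le)
    (by rw [← Finset.sum_div]; exact div_self hA.ne') (fun k _ => hg k)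
  simp only [smul_eq_mul, div_mul_eq_mul_div] at h
  rw [← Finset.sum_div, ← Finset.sum_div] at h
  have h0 : 0 ≤ ∑ k, α k * g k := Finset.sum_nonneg fun k _ => mul_nonneg (hα k).le (hg k)
  unfold L
  set S := ∑ k, α k * g k
  rcases h0.eq_or_lt with hS | hS
  · rw [← hS] at h ⊢
    have := (div_nonneg_iff.1 (by simpa using h))
    rcases this with h | h
    · simpa using h.1
    · linarith
  · rw [Real.log_div hS.ne' hA.ne', div_mul_eq_mul_div, div_le_div_iff_of_pos_right hA] at h
    nlinarith

section

lemma integrand_nonneg {ψ : ℝ → ℝ} (hψpos : ∀ x ∈ Ioi (0 : ℝ), 0 < ψ x)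
    {F : ℝ → ℝ} (hF0 : ∀ x, 0 ≤ F x) :
    0 ≤ᵐ[volume.restrict (Ioi (0 : ℝ))]
      fun x => L (F x / ψ x) * ψ x + Real.exp (-1) * ψ x := by
  filter_upwards [ae_restrict_mem measurableSet_Ioi] with x hx
  have := L_lower (F x / ψ x) (div_nonneg (hF0 x) (hψpos x hx).le)
  have := mul_nonneg this (hψpos x hx).le
  simp only [Pi.zero_apply]
  linarith

lemma relEnt_of_int {ψ : ℝ → ℝ}
    (hψpos : ∀ x ∈ Ioi (0 : ℝ), 0 < ψ x)
    (hψint : IntegrableOn ψ (Ioi (0 : ℝ)))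
    (hψprob : ∫ x in Ioi (0 : ℝ), ψ x = 1)
    {F : ℝ → ℝ} (hF0 : ∀ x, 0 ≤ F x)
    (h : IntegrableOn (fun x => L (F x / ψ x) * ψ x) (Ioi 0)) :
    relEnt F ψ = ((∫ x in Ioi (0 : ℝ), L (F x / ψ x) * ψ x : ℝ) : EReal) := by
  have hi : IntegrableOn (fun x => L (F x / ψ x) * ψ x + Real.exp (-1) * ψ x) (Ioi 0) :=
    h.add (hψint.const_mul _)
  unfold relEnt
  rw [← ofReal_integral_eq_lintegral_ofReal hi (integrand_nonneg hψpos hF0)]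
  rw [EReal.coe_ennreal_ofReal, max_eq_left (integral_nonneg_of_ae (integrand_nonneg hψpos hF0)),
    integral_add h (hψint.const_mul _), integral_const_mul, hψprob, ← EReal.coe_sub]
  simp

lemma relEnt_of_not_int {ψ : ℝ → ℝ} (hψmeas : Measurable ψ)
    (hψpos : ∀ x ∈ Ioi (0 : ℝ), 0 < ψ x)
    (hψint : IntegrableOn ψ (Ioi (0 : ℝ)))
    {F : ℝ → ℝ} (hF : Measurable F) (hF0 : ∀ x, 0 ≤ F x)
    (h : ¬ IntegrableOn (fun x => L (F x / ψ x) * ψ x) (Ioi 0)) :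
    relEnt F ψ = ⊤ := by
  have key : (∫⁻ x in Ioi (0 : ℝ),
      ENNReal.ofReal (L (F x / ψ x) * ψ x + Real.exp (-1) * ψ x)) = ⊤ := by
    by_contra hne
    apply h
    have hm : Measurable (fun x => L (F x / ψ x) * ψ x + Real.exp (-1) * ψ x) :=
      ((L_meas.comp (hF.div hψmeas)).mul hψmeas).add (hψmeas.const_mul _)
    have hi : IntegrableOn (fun x => L (F x / ψ x) * ψ x + Real.exp (-1) * ψ x) (Ioi 0) :=
      (lintegral_ofReal_ne_top_iff_integrable hm.aestronglyMeasurable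
        (integrand_nonneg hψpos hF0)).1 hne
    have := hi.sub (hψint.const_mul (Real.exp (-1)))
    refine this.congr (Filter.Eventually.of_forall fun x => ?_)
    simp
  unfold relEnt
  rw [key]
  simp
end

lemma sum_ne_bot {n : ℕ} (s : Finset (Fin n)) (v : Fin n → EReal) (hv : ∀ k, v k ≠ ⊥) :
    ∑ k ∈ s, v k ≠ ⊥ := by
  induction s using Finset.induction_on with
  | empty => simp
  | insert a s ha ih =>
    rw [Finset.sum_insert ha]
    simp [EReal.add_eq_bot_iff, hv, ih]

lemma coe_sum_aux {n : ℕ} (s : Finset (Fin n)) (v : Fin n → ℝ) :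
    ((∑ k ∈ s, v k : ℝ) : EReal) = ∑ k ∈ s, (v k : EReal) := by
  induction s using Finset.induction_on with
  | empty => simp
  | insert a s ha ih => rw [Finset.sum_insert ha, Finset.sum_insert ha, EReal.coe_add, ih]

theorem stmt4 (ψ : ℝ → ℝ) (hψmeas : Measurable ψ)
    (hψpos : ∀ x ∈ Ioi (0 : ℝ), 0 < ψ x)
    (hψint : IntegrableOn ψ (Ioi (0 : ℝ)))
    (hψprob : ∫ x in Ioi (0 : ℝ), ψ x = 1)
    (n : ℕ) (α : Fin n → ℝ) (hα : ∀ k, 0 < α k)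
    (f : Fin n → ℝ → ℝ) (hfmeas : ∀ k, Measurable (f k))
    (hf0 : ∀ k x, 0 ≤ f k x)
    (hfint : ∀ k, IntegrableOn (f k) (Ioi (0 : ℝ))) :
    relEnt (fun x => ∑ k, α k * f k x) ψ
      ≤ (∑ k, (α k : EReal) * relEnt (f k) ψ)
        + ((Real.log (∑ k, α k) * ∑ k, α k * ∫ x in Ioi (0 : ℝ), f k x : ℝ) : EReal) := by
  have hS0 : ∀ x, 0 ≤ ∑ k, α k * f k x := fun x =>
    Finset.sum_nonneg fun k _ => mul_nonneg (hα k).le (hf0 k x)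
  have hSm : Measurable fun x => ∑ k, α k * f k x :=
    Finset.measurable_sum _ fun k _ => (hfmeas k).const_mul _
  by_cases hall : ∀ k, IntegrableOn (fun x => L (f k x / ψ x) * ψ x) (Ioi 0)
  · have hG1 : IntegrableOn (fun x => ∑ k, α k * (L (f k x / ψ x) * ψ x)) (Ioi 0) :=
      integrable_finsetSum _ fun k _ => (hall k).const_mul _
    have hG2 : IntegrableOn (fun x => ∑ k, α k * f k x) (Ioi 0) :=
      integrable_finsetSum _ fun k _ => (hfint k).const_mul _
    have hG := hG1.add (hG2.const_mul (Real.log (∑ k, α k)))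
    have hle : ∀ x ∈ Ioi (0 : ℝ), L ((∑ k, α k * f k x) / ψ x) * ψ x ≤
        ∑ k, α k * (L (f k x / ψ x) * ψ x) + Real.log (∑ k, α k) * ∑ k, α k * f k x := by
      intro x hx
      have hp := hψpos x hx
      have h := L_jensen n α (fun k => f k x / ψ x) hα (fun k => div_nonneg (hf0 k x) hp.le)
      have h := mul_le_mul_of_nonneg_right h hp.le
      simp only [← mul_div_assoc, ← Finset.sum_div] at h
      refine h.trans_eq ?_
      rw [add_mul, mul_div_assoc, mul_assoc, div_mul_cancel₀ _ hp.ne', Finset.sum_mul]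
      simp only [mul_assoc]
    have hint : IntegrableOn (fun x => L ((∑ k, α k * f k x) / ψ x) * ψ x) (Ioi 0) := by
      refine Integrable.mono' (hG.norm.add (hψint.const_mul (Real.exp (-1))))
        ((L_meas.comp (hSm.div hψmeas)).mul hψmeas).aestronglyMeasurable ?_
      filter_upwards [ae_restrict_mem measurableSet_Ioi, integrand_nonneg hψpos hS0] with x hx h0
      have h1 := hle x hx
      have hp := mul_pos (Real.exp_pos (-1)) (hψpos x hx)
      simp only [Pi.zero_apply, Pi.add_apply, Real.norm_eq_abs] at h0 ⊢
      have h2 := le_abs_self (∑ k, α k * (L (f k x / ψ x) * ψ x) +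
        Real.log (∑ k, α k) * ∑ k, α k * f k x)
      rw [abs_le]
      constructor <;> linarith [abs_nonneg (∑ k, α k * (L (f k x / ψ x) * ψ x) +
        Real.log (∑ k, α k) * ∑ k, α k * f k x)]
    rw [relEnt_of_int hψpos hψint hψprob hS0 hint]
    have hsum : (∑ k, (α k : EReal) * relEnt (f k) ψ) =
        ((∑ k, α k * ∫ x in Ioi (0 : ℝ), L (f k x / ψ x) * ψ x : ℝ) : EReal) := by
      rw [coe_sum_aux]
      refine Finset.sum_congr rfl fun k _ => ?_
      rw [relEnt_of_int hψpos hψint hψprob (hf0 k) (hall k), EReal.coe_mul]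
    rw [hsum, ← EReal.coe_add, EReal.coe_le_coe_iff]
    refine (setIntegral_mono_on hint hG measurableSet_Ioi hle).trans_eq ?_
    simp only [Pi.add_apply]
    rw [integral_add hG1 (hG2.const_mul _), integral_const_mul,
      integral_finsetSum _ fun k _ => (hall k).const_mul _,
      integral_finsetSum _ fun k _ => (hfint k).const_mul _]
    simp only [integral_const_mul]
  · push Not at hall
    obtain ⟨k, hk⟩ := hall
    have hnb : ∀ j, (α j : EReal) * relEnt (f j) ψ ≠ ⊥ := by
      intro j
      by_cases hj : IntegrableOn (fun x => L (f j x / ψ x) * ψ x) (Ioi 0)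
      · rw [relEnt_of_int hψpos hψint hψprob (hf0 j) hj, ← EReal.coe_mul]
        exact EReal.coe_ne_bot _
      · rw [relEnt_of_not_int hψmeas hψpos hψint (hfmeas j) (hf0 j) hj,
          EReal.coe_mul_top_of_pos (hα j)]
        simp
    have htop : (∑ k, (α k : EReal) * relEnt (f k) ψ) = ⊤ := by
      rw [← Finset.add_sum_erase _ _ (Finset.mem_univ k),
        relEnt_of_not_int hψmeas hψpos hψint (hfmeas k) (hf0 k) hk,
        EReal.coe_mul_top_of_pos (hα k)]
      exact EReal.top_add_of_ne_bot (sum_ne_bot _ _ hnb)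
    rw [htop, EReal.top_add_of_ne_bot (EReal.coe_ne_bot _)]
    exact le_top
end

section
/- Let ψ be a positive probability density on (0,∞) that is decreasing on (0,∞), let f be a probability density supported on (0,∞), and let g be a probability density supported on (−∞,0). Then D(f ∗ g | ψ) ≤ D(f | ψ) + e^{−1}, where (f ∗ g)(x) := ∫ f(x−y) g(y) dy denotes the convolution. -/
open MeasureTheory Set
open scoped ENNReal

theorem aux_pt (u p q h : ℝ) (hu : 0 ≤ u) (hp : 0 < p) (hpq : p ≤ q) (hh : 0 < h) :
    u * (Real.log (h / q) + 1) - h ≤ L (u / p) * p := by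
  have hq : 0 < q := hp.trans_le hpq
  have e : L (u / p) * p = u * Real.log (u / p) := by
    unfold L; field_simp
  rw [e]
  rcases hu.eq_or_lt with rfl | hu
  · simp; exact hh.le
  · have h1 := Real.one_sub_inv_le_log_of_pos (div_pos hu hh)
    have h2 := Real.log_le_log hp hpq
    rw [Real.log_div hu.ne' hh.ne'] at h1
    rw [Real.log_div hh.ne' hq.ne', Real.log_div hu.ne' hp.ne']
    have h3 : u * (1 - (u / h)⁻¹) = u - h := by field_simp
    have h4 := mul_le_mul_of_nonneg_left h1 hu.le
    have h5 := mul_le_mul_of_nonneg_left h2 hu.le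
    rw [h3] at h4
    nlinarith

theorem aux_int (k : ℝ → ℝ) (hk : Integrable k) :
    ENNReal.ofReal (∫ y, k y) ≤ ∫⁻ y, ENNReal.ofReal (k y) := by
  have h1 : ∫ y, k y ≤ ∫ y, max (k y) 0 :=
    integral_mono hk hk.pos_part (fun y => le_max_left _ _)
  refine (ENNReal.ofReal_le_ofReal h1).trans ?_
  rw [ofReal_integral_eq_lintegral_ofReal hk.pos_part
    (Filter.Eventually.of_forall fun y => le_max_right _ _)]
  refine lintegral_mono fun y => ?_
  rcases le_total (k y) 0 with h | h <;> simp [h]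

theorem stmt5 (ψ : ℝ → ℝ) (hψmeas : Measurable ψ)
    (hψpos : ∀ x ∈ Ioi (0 : ℝ), 0 < ψ x)
    (hψint : IntegrableOn ψ (Ioi (0 : ℝ)))
    (hψprob : ∫ x in Ioi (0 : ℝ), ψ x = 1)
    (hψanti : AntitoneOn ψ (Ioi (0 : ℝ)))
    (f g : ℝ → ℝ)
    (hfmeas : Measurable f) (hf0 : ∀ x, 0 ≤ f x)
    (hfsupp : ∀ x ≤ (0 : ℝ), f x = 0)
    (hfint : Integrable f) (hfprob : ∫ x, f x = 1)
    (hgmeas : Measurable g) (hg0 : ∀ x, 0 ≤ g x)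
    (hgsupp : ∀ x, (0 : ℝ) ≤ x → g x = 0)
    (hgint : Integrable g) (hgprob : ∫ x, g x = 1) :
    relEnt (fun x => ∫ y, f (x - y) * g y) ψ
      ≤ relEnt f ψ + ((Real.exp (-1) : ℝ) : EReal) := by
  set Φ : ℝ → ℝ≥0∞ := fun x =>
    ENNReal.ofReal (L (f x / ψ x) * ψ x + Real.exp (-1) * ψ x) with hΦ
  have hΦm : Measurable Φ := by
    unfold Φ L
    fun_prop
  set Φ' : ℝ → ℝ≥0∞ := (Ioi (0 : ℝ)).indicator Φ with hΦ'
  have hΦ'm : Measurable Φ' := hΦm.indicator measurableSet_Ioi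
  set G : ℝ → ℝ≥0∞ := fun y => ENNReal.ofReal (g y) with hG
  have hGm : Measurable G := hgmeas.ennreal_ofReal
  have hG1 : ∫⁻ y, G y = 1 := by
    rw [hG, ← ofReal_integral_eq_lintegral_ofReal hgint (Filter.Eventually.of_forall hg0), hgprob]
    simp
  have key : ∀ x ∈ Ioi (0 : ℝ), ENNReal.ofReal
      (L ((∫ y, f (x - y) * g y) / ψ x) * ψ x + Real.exp (-1) * ψ x)
      ≤ (∫⁻ y, Φ' (x - y) * G y) + ENNReal.ofReal (Real.exp (-1) * ψ x) := by
    intro x hx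
    have hψx := hψpos x hx
    refine ENNReal.ofReal_add_le.trans (add_le_add_left ?_ _)
    set h := ∫ y, f (x - y) * g y with hh
    have h0 : 0 ≤ h := integral_nonneg fun y => mul_nonneg (hf0 _) (hg0 _)
    rcases h0.eq_or_lt with h0 | h0
    · rw [← h0]; simp [L]
    have hi : Integrable (fun y => f (x - y) * g y) := by
      by_contra hc
      rw [hh, integral_undef hc] at h0
      exact lt_irrefl _ h0
    set c := Real.log (h / ψ x) + 1 with hc
    have e1 : L (h / ψ x) * ψ x = ∫ y, (f (x - y) * g y * c - h * g y) := by
      rw [integral_sub (hi.mul_const c) (hgint.const_mul h), integral_mul_const,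
        integral_const_mul, hgprob, ← hh, hc]
      unfold L; field_simp; ring
    rw [e1]
    refine (aux_int _ ((hi.mul_const c).sub (hgint.const_mul h))).trans ?_
    refine lintegral_mono fun y => ?_
    rcases le_or_gt 0 y with hy | hy
    · simp [hgsupp y hy]
    · have hx' : (0 : ℝ) < x := hx
      have hz : x - y ∈ Ioi (0 : ℝ) := by simp only [mem_Ioi]; linarith
      have hp := hψpos _ hz
      have hpt := aux_pt (f (x - y)) (ψ (x - y)) (ψ x) h (hf0 _) hp
        (hψanti hx hz (by linarith)) h0
      simp only [hΦ', indicator_of_mem hz, hΦ, hG]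
      rw [← ENNReal.ofReal_mul' (hg0 y)]
      refine ENNReal.ofReal_le_ofReal ?_
      have he : 0 ≤ Real.exp (-1) * ψ (x - y) := by positivity
      have := mul_le_mul_of_nonneg_right (hpt.trans (le_add_of_nonneg_right he)) (hg0 y)
      refine le_trans (le_of_eq ?_) this
      simp only [Pi.sub_apply]; rw [hc]; ring
  have hψl : ∫⁻ x in Ioi (0 : ℝ), ENNReal.ofReal (Real.exp (-1) * ψ x)
      = ENNReal.ofReal (Real.exp (-1)) := by
    rw [← ofReal_integral_eq_lintegral_ofReal (hψint.const_mul _), integral_const_mul, hψprob,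
      mul_one]
    filter_upwards [ae_restrict_mem measurableSet_Ioi] with x hx
    have := hψpos x hx
    positivity
  have ton : ∫⁻ x, ∫⁻ y, Φ' (x - y) * G y = ∫⁻ x in Ioi (0 : ℝ), Φ x := by
    rw [lintegral_lintegral_swap (by fun_prop)]
    have : ∀ y, ∫⁻ x, Φ' (x - y) * G y = (∫⁻ x, Φ' x) * G y := by
      intro y
      rw [lintegral_mul_const _ (by fun_prop), lintegral_sub_right_eq_self Φ' y]
    simp_rw [this]
    rw [lintegral_const_mul _ hGm, hG1, mul_one, hΦ', lintegral_indicator measurableSet_Ioi]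
  have main : ∫⁻ x in Ioi (0 : ℝ), ENNReal.ofReal
      (L ((∫ y, f (x - y) * g y) / ψ x) * ψ x + Real.exp (-1) * ψ x)
      ≤ (∫⁻ x in Ioi (0 : ℝ), Φ x) + ENNReal.ofReal (Real.exp (-1)) := by
    refine (setLIntegral_mono' measurableSet_Ioi key).trans ?_
    rw [lintegral_add_right _ (by fun_prop), hψl, ← ton]
    gcongr
    exact Measure.restrict_le_self
  unfold relEnt
  rw [EReal.sub_add_cancel]
  refine EReal.sub_le_of_le_add ?_
  refine (EReal.coe_ennreal_le_coe_ennreal_iff.2 main).trans (le_of_eq ?_)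
  rw [EReal.coe_ennreal_add, EReal.coe_ennreal_ofReal, max_eq_left (Real.exp_pos _).le]
end

section
/- Let X₁, X₂, … be i.i.d. real random variables with mean 0 and variance 1, and let S̄_n := max_{1≤k≤n} (X₁+…+X_k). Then for every ε > 0 there exists a constant C > 0 such that E[(S̄_n/√n)² · 1_{S̄_n > C√n}] ≤ ε for all sufficiently large n ∈ ℕ. -/
open MeasureTheory ProbabilityTheory Filter
open scoped ENNReal

/-- partial sums of a sequence -/
def psum (n : ℕ) (y : ℕ → ℝ) : ℝ := ∑ i ∈ Finset.range n, y i

/-- running max of partial sums (including 0) -/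
noncomputable def pmax : ℕ → (ℕ → ℝ) → ℝ
  | 0, _ => 0
  | n+1, y => max (pmax n y) (psum (n+1) y)

lemma psum_succ (n : ℕ) (y : ℕ → ℝ) : psum (n+1) y = psum n y + y n := Finset.sum_range_succ _ _
lemma psum_zero (y : ℕ → ℝ) : psum 0 y = 0 := by simp [psum]
lemma pmax_succ (n : ℕ) (y : ℕ → ℝ) : pmax (n+1) y = max (pmax n y) (psum (n+1) y) := rfl
lemma pmax_zero (y : ℕ → ℝ) : pmax 0 y = 0 := rfl

lemma pmax_nonneg (n : ℕ) (y : ℕ → ℝ) : 0 ≤ pmax n y := by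
  induction n with
  | zero => exact le_refl _
  | succ n ih => exact le_max_of_le_left ih

lemma psum_le_pmax (n k : ℕ) (hk : k ≤ n) (y : ℕ → ℝ) : psum k y ≤ pmax n y := by
  induction n with
  | zero => obtain rfl : k = 0 := by omega
            simp [psum, pmax]
  | succ n ih =>
    rcases Nat.lt_or_ge n k with h | h
    · obtain rfl : k = n + 1 := by omega
      exact le_max_right _ _
    · exact le_max_of_le_left (ih h)

lemma pmax_add (n : ℕ) (y z w : ℕ → ℝ) (h : ∀ i, w i = y i + z i) :
    pmax n w ≤ pmax n y + pmax n z := by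
  have hs : ∀ k, psum k w = psum k y + psum k z := by
    intro k; simp [psum, h, Finset.sum_add_distrib]
  induction n with
  | zero => simp [pmax]
  | succ n ih =>
    rw [pmax_succ, pmax_succ, pmax_succ, hs]
    apply max_le
    · exact ih.trans (add_le_add (le_max_left _ _) (le_max_left _ _))
    · exact add_le_add (le_max_right _ _) (le_max_right _ _)

lemma measurable_psum (n : ℕ) : Measurable (psum n) := by
  unfold psum; fun_prop

lemma measurable_pmax (n : ℕ) : Measurable (pmax n) := by
  induction n with
  | zero => exact measurable_const
  | succ n ih => exact ih.max (measurable_psum _)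

lemma psum_dep (n : ℕ) (y z : ℕ → ℝ) (h : ∀ i < n, y i = z i) : psum n y = psum n z :=
  Finset.sum_congr rfl (fun i hi => h i (Finset.mem_range.mp hi))

lemma pmax_dep (n : ℕ) (y z : ℕ → ℝ) (h : ∀ i < n, y i = z i) : pmax n y = pmax n z := by
  induction n with
  | zero => rfl
  | succ n ih =>
    rw [pmax_succ, pmax_succ, psum_dep _ y z h, ih (fun i hi => h i (by omega))]

lemma doob2 (n : ℕ) (y : ℕ → ℝ) :
    (pmax n y)^2 ≤ 4 * (psum n y)^2 - 4 * ∑ i ∈ Finset.range n, pmax i y * y i := by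
  have key : (pmax n y)^2 / 2 ≤ pmax n y * psum n y - ∑ i ∈ Finset.range n, pmax i y * y i := by
    induction n with
    | zero => simp [pmax]
    | succ n ih =>
      rw [Finset.sum_range_succ, pmax_succ]
      have hs := psum_succ n y
      rcases le_total (pmax n y) (psum (n+1) y) with h | h
      · have hy : y n = psum (n+1) y - psum n y := by linarith
        rw [max_eq_right h, hy]
        generalize psum (n+1) y = s at *
        nlinarith [sq_nonneg (s - pmax n y)]
      · rw [max_eq_left h, hs]
        nlinarith
  nlinarith [sq_nonneg (pmax n y - 2 * psum n y)]

lemma doob4 (n : ℕ) (y : ℕ → ℝ) :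
    (pmax n y)^4 ≤ 32 * (psum n y)^4 - 4 * ∑ i ∈ Finset.range n, (pmax i y)^3 * y i := by
  have key : (3/4) * (pmax n y)^4 ≤
      (pmax n y)^3 * psum n y - ∑ i ∈ Finset.range n, (pmax i y)^3 * y i := by
    induction n with
    | zero => simp [pmax]
    | succ n ih =>
      rw [Finset.sum_range_succ, pmax_succ]
      have hs := psum_succ n y
      have hy : y n = psum (n+1) y - psum n y := by linarith
      have h0 := pmax_nonneg n y
      rcases le_total (pmax n y) (psum (n+1) y) with h | h
      · rw [max_eq_right h, hy]
        generalize psum (n+1) y = s at *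
        generalize pmax n y = m at *
        have : 0 ≤ (s - m)^2 * (s^2 + 2*s*m+3*m^2) := by
          have : 0 ≤ s * m := mul_nonneg (h0.trans h) h0
          apply mul_nonneg (sq_nonneg _)
          nlinarith [sq_nonneg s, sq_nonneg m]
        nlinarith
      · rw [max_eq_left h, hs]
        nlinarith
  have young : (pmax n y)^3 * psum n y ≤ (pmax n y)^4 / 2 + 8 * (psum n y)^4 := by
    generalize psum n y = s
    generalize pmax n y = m
    nlinarith [sq_nonneg (m^2 - 2*m*s), sq_nonneg (m*s - 4 * s^2), sq_nonneg (m^2 - m*s), sq_nonneg (m^2-4*s^2),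
      sq_nonneg (m*s), sq_nonneg (s^2), sq_nonneg (m^2)]
  linarith

section
set_option linter.unusedSectionVars false
variable {Ω : Type*} [MeasurableSpace Ω] {μ : Measure Ω} [IsProbabilityMeasure μ]

lemma indep_past (Y : ℕ → Ω → ℝ) (hm : ∀ i, Measurable (Y i)) (hi : iIndepFun Y μ)
    (n : ℕ) (G : (ℕ → ℝ) → ℝ) (hG : Measurable G)
    (hd : ∀ y z : ℕ → ℝ, (∀ i < n, y i = z i) → G y = G z) :
    IndepFun (fun ω => G (fun i => Y i ω)) (Y n) μ := by
  have h := hi.indepFun_finset (Finset.range n) {n} (by simp) hm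
  let e : ((Finset.range n) → ℝ) → (ℕ → ℝ) := fun x i =>
    if h : i ∈ Finset.range n then x ⟨i, h⟩ else 0
  have he : Measurable e := by
    refine measurable_pi_lambda _ (fun i => ?_)
    by_cases h : i ∈ Finset.range n
    · simp only [e, h, dif_pos]; exact measurable_pi_apply _
    · simp only [e, h]; exact measurable_const
  have mψ : Measurable (fun x : (({n} : Finset ℕ) → ℝ) => x ⟨n, Finset.mem_singleton_self n⟩) := by
    fun_prop
  have h2 := h.comp (hG.comp he) mψ
  convert h2 using 1
  · funext ω
    apply hd
    intro i hi
    simp [e, hi]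
  · rfl

lemma psum_memLp (Y : ℕ → Ω → ℝ) (p : ℝ≥0∞) (hL : ∀ i, MemLp (Y i) p μ) (n : ℕ) :
    MemLp (fun ω => psum n (fun i => Y i ω)) p μ := by
  unfold psum
  exact memLp_finsetSum _ (fun i _ => hL i)

lemma pmax_memLp (Y : ℕ → Ω → ℝ) (p : ℝ≥0∞) (hL : ∀ i, MemLp (Y i) p μ) (n : ℕ) :
    MemLp (fun ω => pmax n (fun i => Y i ω)) p μ := by
  induction n with
  | zero => exact MemLp.zero
  | succ n ih => exact ih.sup (psum_memLp Y p hL (n+1))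

lemma iadd {f g : Ω → ℝ} (hf : Integrable f μ) (hg : Integrable g μ) :
    Integrable (fun ω => f ω + g ω) μ := hf.add hg

lemma psum_sq (Y : ℕ → Ω → ℝ) (hm : ∀ i, Measurable (Y i)) (hi : iIndepFun Y μ)
    (hL : ∀ i, MemLp (Y i) 2 μ) (h0 : ∀ i, ∫ ω, Y i ω ∂μ = 0) (δ : ℝ)
    (hδ : ∀ i, ∫ ω, (Y i ω)^2 ∂μ ≤ δ) (n : ℕ) :
    ∫ ω, (psum n (fun i => Y i ω))^2 ∂μ ≤ n * δ := by
  induction n with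
  | zero => simp [psum]
  | succ n ih =>
    have ind := indep_past Y hm hi n (psum n) (measurable_psum n) (psum_dep n)
    have hs := psum_memLp Y 2 hL n
    have e : ∀ ω, (psum (n+1) (fun i => Y i ω))^2 = ((psum n (fun i => Y i ω))^2
      + 2 * (psum n (fun i => Y i ω) * Y n ω)) + (Y n ω)^2 := by
      intro ω; rw [psum_succ]; ring
    simp_rw [e]
    have i1 := hs.integrable_sq
    have i2 : Integrable (fun ω => psum n (fun i => Y i ω) * Y n ω) μ := hs.integrable_mul (hL n)
    have i3 := (hL n).integrable_sq
    rw [integral_add (iadd i1 (i2.const_mul 2)) i3, integral_add i1 (i2.const_mul 2),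
      integral_const_mul, ind.integral_fun_mul_eq_mul_integral hs.1 (hL n).1, h0 n]
    have := hδ n
    push_cast
    linarith

lemma pmax_sq (Y : ℕ → Ω → ℝ) (hm : ∀ i, Measurable (Y i)) (hi : iIndepFun Y μ)
    (hL : ∀ i, MemLp (Y i) 2 μ) (h0 : ∀ i, ∫ ω, Y i ω ∂μ = 0) (δ : ℝ)
    (hδ : ∀ i, ∫ ω, (Y i ω)^2 ∂μ ≤ δ) (n : ℕ) :
    ∫ ω, (pmax n (fun i => Y i ω))^2 ∂μ ≤ 4 * (n * δ) := by
  have hs := (psum_memLp Y 2 hL n).integrable_sq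
  have hM := (pmax_memLp Y 2 hL n).integrable_sq
  have hp : ∀ i, Integrable (fun ω => pmax i (fun i => Y i ω) * Y i ω) μ :=
    fun i => (pmax_memLp Y 2 hL i).integrable_mul (hL i)
  have hsum : Integrable (fun ω => ∑ i ∈ Finset.range n, pmax i (fun i => Y i ω) * Y i ω) μ :=
    integrable_finsetSum _ (fun i _ => hp i)
  have := integral_mono hM ((hs.const_mul 4).sub (hsum.const_mul 4))
    (fun ω => doob2 n (fun i => Y i ω))
  refine this.trans ?_
  simp only [Pi.sub_apply]
  rw [integral_sub (hs.const_mul 4) (hsum.const_mul 4), integral_const_mul, integral_const_mul,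
    integral_finsetSum _ (fun i _ => hp i)]
  have z : ∀ i, ∫ ω, pmax i (fun i => Y i ω) * Y i ω ∂μ = 0 := by
    intro i
    have ind := indep_past Y hm hi i (pmax i) (measurable_pmax i) (pmax_dep i)
    rw [ind.integral_fun_mul_eq_mul_integral (pmax_memLp Y 2 hL i).1 (hL i).1, h0 i, mul_zero]
  simp only [z, Finset.sum_const_zero]
  have := psum_sq Y hm hi hL h0 δ hδ n
  linarith

lemma top_int {f : Ω → ℝ} (h : MemLp f ∞ μ) : Integrable f μ := h.integrable le_top

lemma top_mul {f g : Ω → ℝ} (h : MemLp f ∞ μ) (hg : MemLp g ∞ μ) :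
    MemLp (fun ω => f ω * g ω) ∞ μ := hg.mul h

lemma top_pow {f : Ω → ℝ} (h : MemLp f ∞ μ) (k : ℕ) : MemLp (fun ω => f ω ^ k) ∞ μ := by
  induction k with
  | zero => simpa using memLp_const (1:ℝ)
  | succ k ih => simp_rw [pow_succ]; exact top_mul ih h

lemma psum_four (Y : ℕ → Ω → ℝ) (hm : ∀ i, Measurable (Y i)) (hi : iIndepFun Y μ)
    (L : ℝ) (hB : ∀ i ω, |Y i ω| ≤ L) (hL : ∀ i, MemLp (Y i) ∞ μ)
    (h0 : ∀ i, ∫ ω, Y i ω ∂μ = 0) (n : ℕ) :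
    ∫ ω, (psum n (fun i => Y i ω))^4 ∂μ ≤ 3 * L^4 * n^2 := by
  have h2 : ∀ i, ∫ ω, (Y i ω)^2 ∂μ ≤ L^2 := by
    intro i
    have := integral_mono (top_int (top_pow (hL i) 2)) (integrable_const (μ := μ) (L^2))
      (fun ω => sq_le_sq' (by linarith [abs_le.mp (hB i ω)]) (abs_le.mp (hB i ω)).2)
    simpa using this
  have h4 : ∀ i, ∫ ω, (Y i ω)^4 ∂μ ≤ L^4 := by
    intro i
    have := integral_mono (top_int (top_pow (hL i) 4)) (integrable_const (μ := μ) (L^4))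
      (fun ω => by
        have : |Y i ω|^4 ≤ L^4 := pow_le_pow_left₀ (abs_nonneg _) (hB i ω) 4
        simpa [abs_pow, Even.pow_abs (by decide : Even 4)] using this)
    simpa using this
  have hL2 : ∀ i, MemLp (Y i) 2 μ := fun i => (hL i).mono_exponent le_top
  have hz : ∀ n, ∫ ω, psum n (fun i => Y i ω) ∂μ = 0 := by
    intro n
    unfold psum
    rw [integral_finsetSum _ (fun i _ => top_int (hL i))]
    simp [h0]
  induction n with
  | zero => simp [psum]
  | succ n ih =>
    have ind := indep_past Y hm hi n (psum n) (measurable_psum n) (psum_dep n)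
    have hs := psum_memLp Y ∞ hL n
    have e : ∀ ω, (psum (n+1) (fun i => Y i ω))^4 = (psum n (fun i => Y i ω))^4
      + (4 * ((psum n (fun i => Y i ω))^3 * Y n ω)
      + (6 * ((psum n (fun i => Y i ω))^2 * (Y n ω)^2)
      + (4 * ((psum n (fun i => Y i ω)) * (Y n ω)^3) + (Y n ω)^4))) := by
      intro ω; rw [psum_succ]; ring
    simp_rw [e]
    have i1 := top_int (top_pow hs 4)
    have i2 := (top_int (top_mul (top_pow hs 3) (hL n))).const_mul 4
    have i3 := (top_int (top_mul (top_pow hs 2) (top_pow (hL n) 2))).const_mul 6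
    have i4 := (top_int (top_mul hs (top_pow (hL n) 3))).const_mul 4
    have i5 := top_int (top_pow (hL n) 4)
    have ind1 := (ind.comp (φ := fun x => x^3) (ψ := fun x => x) (by fun_prop) (by fun_prop)).integral_fun_mul_eq_mul_integral (top_pow hs 3).1 (hL n).1
    have ind2 := (ind.comp (φ := fun x => x^2) (ψ := fun x => x^2) (by fun_prop) (by fun_prop)).integral_fun_mul_eq_mul_integral (top_pow hs 2).1 (top_pow (hL n) 2).1
    have ind3 := (ind.comp (φ := fun x => x) (ψ := fun x => x^3) (by fun_prop) (by fun_prop)).integral_fun_mul_eq_mul_integral hs.1 (top_pow (hL n) 3).1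
    simp only [Function.comp_apply] at ind1 ind2 ind3
    rw [integral_add i1 (iadd i2 (iadd i3 (iadd i4 i5))), integral_add i2 (iadd i3 (iadd i4 i5)),
      integral_add i3 (iadd i4 i5), integral_add i4 i5, integral_const_mul, integral_const_mul,
      integral_const_mul, ind1, ind2, ind3]
    have a0 : ∫ ω, ((fun x : ℝ => x) ∘ Y n) ω ∂μ = 0 := h0 n
    have b0 : ∫ ω, ((fun x : ℝ => x) ∘ fun ω => psum n (fun i => Y i ω)) ω ∂μ = 0 := hz n
    simp only [Function.comp_apply] at a0 b0
    rw [a0, b0]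
    have q := psum_sq Y hm hi hL2 h0 (L^2) h2 n
    have r : (∫ ω, (psum n (fun i => Y i ω))^2 ∂μ) * ∫ ω, (Y n ω)^2 ∂μ ≤ (n * L^2) * L^2 :=
      mul_le_mul q (h2 n) (integral_nonneg fun _ => sq_nonneg _) (by positivity)
    have := h4 n
    have : 0 ≤ L^4 := by positivity
    push_cast
    nlinarith

lemma pmax_four (Y : ℕ → Ω → ℝ) (hm : ∀ i, Measurable (Y i)) (hi : iIndepFun Y μ)
    (L : ℝ) (hB : ∀ i ω, |Y i ω| ≤ L) (hL : ∀ i, MemLp (Y i) ∞ μ)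
    (h0 : ∀ i, ∫ ω, Y i ω ∂μ = 0) (n : ℕ) :
    ∫ ω, (pmax n (fun i => Y i ω))^4 ∂μ ≤ 96 * L^4 * n^2 := by
  have hs := top_int (top_pow (psum_memLp Y ∞ hL n) 4)
  have hM := top_int (top_pow (pmax_memLp Y ∞ hL n) 4)
  have hp : ∀ i, Integrable (fun ω => (pmax i (fun i => Y i ω))^3 * Y i ω) μ :=
    fun i => top_int (top_mul (top_pow (pmax_memLp Y ∞ hL i) 3) (hL i))
  have hsum : Integrable (fun ω => ∑ i ∈ Finset.range n, (pmax i (fun i => Y i ω))^3 * Y i ω) μ :=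
    integrable_finsetSum _ (fun i _ => hp i)
  have := integral_mono hM ((hs.const_mul 32).sub (hsum.const_mul 4))
    (fun ω => doob4 n (fun i => Y i ω))
  refine this.trans ?_
  simp only [Pi.sub_apply]
  rw [integral_sub (hs.const_mul 32) (hsum.const_mul 4), integral_const_mul, integral_const_mul,
    integral_finsetSum _ (fun i _ => hp i)]
  have z : ∀ i, ∫ ω, (pmax i (fun i => Y i ω))^3 * Y i ω ∂μ = 0 := by
    intro i
    have ind := indep_past Y hm hi i (fun y => (pmax i y)^3) ((measurable_pmax i).pow_const 3)
      (fun y z h => by simp only [pmax_dep i y z h])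
    rw [ind.integral_fun_mul_eq_mul_integral (top_pow (pmax_memLp Y ∞ hL i) 3).1 (hL i).1,
      h0 i, mul_zero]
  simp only [z, Finset.sum_const_zero]
  have := psum_four Y hm hi L hB hL h0 n
  linarith

/-- truncation at level `k` -/
noncomputable def trunc (k : ℕ) (x : ℝ) : ℝ := if |x| ≤ k then x else 0

lemma measurable_trunc (k : ℕ) : Measurable (trunc k) := by
  unfold trunc
  exact Measurable.ite (measurableSet_le (by fun_prop) (by fun_prop)) measurable_id measurable_const

lemma trunc_abs (k : ℕ) (x : ℝ) : |trunc k x| ≤ k := by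
  unfold trunc; split_ifs with h
  · exact h
  · simp

lemma trunc_tail (W : Ω → ℝ) (hW : Measurable W) (hL : MemLp W 2 μ) (δ : ℝ) (hδ : 0 < δ) :
    ∃ k : ℕ, ∫ ω, (W ω - trunc k (W ω))^2 ∂μ ≤ δ := by
  have : Tendsto (fun k : ℕ => ∫ ω, (W ω - trunc k (W ω))^2 ∂μ) atTop (nhds (∫ ω, (0:ℝ) ∂μ)) := by
    refine tendsto_integral_of_dominated_convergence (fun ω => (W ω)^2) ?_ hL.integrable_sq ?_ ?_
    · intro k
      exact (((hW.sub ((measurable_trunc k).comp hW)).pow_const 2)).aestronglyMeasurable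
    · intro k
      refine ae_of_all _ (fun ω => ?_)
      rw [Real.norm_of_nonneg (sq_nonneg _)]
      unfold trunc; split_ifs
      · simp [sq_nonneg]
      · simp
    · refine ae_of_all _ (fun ω => ?_)
      apply tendsto_const_nhds.congr'
      obtain ⟨K, hK⟩ := exists_nat_ge |W ω|
      filter_upwards [eventually_ge_atTop K] with k hk
      have : |W ω| ≤ k := hK.trans (by exact_mod_cast hk)
      simp [trunc, this]
  simp only [integral_zero] at this
  exact ((this.eventually (ge_mem_nhds hδ)).exists)

end

lemma final_num (K ε C : ℝ) (hK : 0 ≤ K) (hε : 0 < ε) (hC : C = 1 + 2 * K / ε) :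
    K / C^2 ≤ ε / 2 := by
  have h0 : 0 ≤ 2 * K / ε := by positivity
  have h1 : 1 ≤ C := by linarith
  rw [div_le_iff₀ (by positivity)]
  have e2 : ε / 2 * (2 * K / ε) = K := by field_simp
  have h3 : 2 * K / ε ≤ C^2 := by nlinarith
  have := mul_le_mul_of_nonneg_left h3 (show 0 ≤ ε/2 by positivity)
  linarith

set_option maxHeartbeats 1000000 in
/-- Uniform smallness of the tail second moment of `S̄ n / √n`: for every `ε > 0`
there is `C > 0` with `E[(S̄ n/√n)² 1_{S̄ n > C √n}] ≤ ε` for all large `n`. -/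
theorem stmt11 {Ω : Type*} [MeasureSpace Ω] [IsProbabilityMeasure (ℙ : Measure Ω)]
    (X : ℕ → Ω → ℝ) (hmeas : ∀ i, Measurable (X i))
    (hindep : iIndepFun X ℙ)
    (hident : ∀ i, Measure.map (X i) ℙ = Measure.map (X 0) ℙ)
    (hL2 : MemLp (X 0) 2 ℙ)
    (hmean : ∫ ω, X 0 ω ∂ℙ = 0)
    (hvar : ∫ ω, (X 0 ω) ^ 2 ∂ℙ = 1)
    (Sbar : ℕ → Ω → ℝ)
    (hSbar : ∀ n, ∀ hn : 1 ≤ n, ∀ ω, Sbar n ω =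
      (Finset.Icc 1 n).sup' (Finset.nonempty_Icc.mpr hn)
        (fun k => ∑ i ∈ Finset.range k, X i ω)) :
    ∀ ε > (0 : ℝ), ∃ C > (0 : ℝ), ∃ N : ℕ, ∀ n ≥ N,
      ∫ ω in {ω | Sbar n ω > C * Real.sqrt n},
        (Sbar n ω / Real.sqrt n) ^ 2 ∂ℙ ≤ ε := by
  intro ε hε
  obtain ⟨k, hk⟩ := trunc_tail (μ := ℙ) (X 0) (hmeas 0) hL2 (ε/32) (by positivity)
  have hid : ∀ i, IdentDistrib (X i) (X 0) ℙ ℙ := fun i =>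
    ⟨(hmeas i).aemeasurable, (hmeas 0).aemeasurable, hident i⟩
  have hLX : ∀ i, MemLp (X i) 2 ℙ := fun i => (hid i).symm.memLp_iff.mp hL2
  have mt := measurable_trunc k
  set m : ℝ := ∫ ω, trunc k (X 0 ω) ∂ℙ with hmdef
  have hm_abs : |m| ≤ k := by
    have := norm_integral_le_of_norm_le_const (μ := (ℙ : Measure Ω)) (f := fun ω => trunc k (X 0 ω))
      (C := k) (ae_of_all _ (fun ω => trunc_abs k _))
    simpa using this
  set L : ℝ := 2 * k with hLdef
  have tInf : ∀ i, MemLp (fun ω => trunc k (X i ω)) ∞ ℙ := fun i =>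
    memLp_top_of_bound (mt.comp (hmeas i)).aestronglyMeasurable k (ae_of_all _ (fun ω => trunc_abs k _))
  have tmean : ∀ i, ∫ ω, trunc k (X i ω) ∂ℙ = m := fun i =>
    ((hid i).comp mt).integral_eq
  have xmean : ∀ i, ∫ ω, X i ω ∂ℙ = 0 := fun i => (hid i).integral_eq.trans hmean
  let Y : ℕ → Ω → ℝ := fun i ω => trunc k (X i ω) - m
  let Z : ℕ → Ω → ℝ := fun i ω => X i ω - trunc k (X i ω) + m
  have hYm : ∀ i, Measurable (Y i) := fun i => (mt.comp (hmeas i)).sub_const m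
  have hZm : ∀ i, Measurable (Z i) := fun i => ((hmeas i).sub (mt.comp (hmeas i))).add_const m
  have hYi : iIndepFun Y ℙ := hindep.comp (fun _ x => trunc k x - m) (fun _ => mt.sub_const m)
  have hZi : iIndepFun Z ℙ := hindep.comp (fun _ x => x - trunc k x + m)
    (fun _ => (measurable_id.sub mt).add_const m)
  have hYB : ∀ i ω, |Y i ω| ≤ L := by
    intro i ω
    have := abs_sub (trunc k (X i ω)) m
    have := trunc_abs k (X i ω)
    simp only [Y]; linarith
  have hYL : ∀ i, MemLp (Y i) ∞ ℙ := fun i =>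
    memLp_top_of_bound (hYm i).aestronglyMeasurable L (ae_of_all _ (hYB i))
  have hY0 : ∀ i, ∫ ω, Y i ω ∂ℙ = 0 := by
    intro i
    simp only [Y]
    rw [integral_sub (top_int (tInf i)) (integrable_const _), tmean]; simp
  have hDL : ∀ i, MemLp (fun ω => X i ω - trunc k (X i ω)) 2 ℙ := fun i =>
    (hLX i).sub ((tInf i).mono_exponent le_top)
  have hZL : ∀ i, MemLp (Z i) 2 ℙ := fun i => (hDL i).add (memLp_const m)
  have iX : ∀ i, Integrable (X i) ℙ := fun i => (hLX i).integrable one_le_two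
  have hDmean : ∀ i, ∫ ω, (X i ω - trunc k (X i ω)) ∂ℙ = - m := by
    intro i
    rw [integral_sub (iX i) (top_int (tInf i)), tmean, xmean]; simp
  have hZ0 : ∀ i, ∫ ω, Z i ω ∂ℙ = 0 := by
    intro i
    simp only [Z]
    rw [integral_add ((hDL i).integrable one_le_two) (integrable_const _), hDmean]; simp
  have hZδ : ∀ i, ∫ ω, (Z i ω)^2 ∂ℙ ≤ ε/32 := by
    intro i
    have e : ∀ ω, (Z i ω)^2 = (X i ω - trunc k (X i ω))^2
      + (2 * m * (X i ω - trunc k (X i ω)) + m^2) := by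
      intro ω; simp only [Z]; ring
    simp_rw [e]
    have i1 := (hDL i).integrable_sq
    have i2 := ((hDL i).integrable one_le_two).const_mul (2*m)
    rw [integral_add i1 (iadd i2 (integrable_const (m^2))), integral_add i2 (integrable_const (m^2)),
      integral_const_mul, hDmean]
    have : ∫ ω, (X i ω - trunc k (X i ω))^2 ∂ℙ = ∫ ω, (X 0 ω - trunc k (X 0 ω))^2 ∂ℙ :=
      ((hid i).comp (u := fun x => (x - trunc k x)^2) ((measurable_id.sub mt).pow_const 2)).integral_eq
    rw [this]
    simp
    nlinarith [sq_nonneg m]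
  set K : ℝ := 8 * (96 * L^4) with hK
  have hK0 : 0 ≤ K := by positivity
  set C : ℝ := 1 + 2 * K / ε with hC
  have hC1 : 1 ≤ C := by
    have : 0 ≤ 2 * K / ε := by positivity
    linarith
  have hCpos : 0 < C := by linarith
  refine ⟨C, hCpos, 1, fun n hn => ?_⟩
  have hn0 : (0:ℝ) < n := by exact_mod_cast hn
  set r := Real.sqrt n with hr
  have hr0 : 0 < r := Real.sqrt_pos.mpr hn0
  have hr2 : r^2 = n := Real.sq_sqrt hn0.le
  have hr4 : r^4 = n^2 := by rw [← hr2]; ring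
  let A : Ω → ℝ := fun ω => pmax n (fun i => Y i ω)
  let B : Ω → ℝ := fun ω => pmax n (fun i => Z i ω)
  have hA := pmax_four Y hYm hYi L hYB hYL hY0 n
  have hB := pmax_sq Z hZm hZi hZL hZ0 _ hZδ n
  have iA : Integrable (fun ω => A ω ^ 4) ℙ := top_int (top_pow (pmax_memLp Y ∞ hYL n) 4)
  have iB : Integrable (fun ω => B ω ^ 2) ℙ := (pmax_memLp Z 2 hZL n).integrable_sq
  let g : Ω → ℝ := fun ω => (8 / (C^2 * n^2)) * A ω ^ 4 + (4 / n) * B ω ^2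
  have ig : Integrable g ℙ := (iA.const_mul _).add (iB.const_mul _)
  have hg0 : ∀ ω, 0 ≤ g ω := fun ω => by
    have : 0 ≤ A ω ^ 4 := by positivity
    simp only [g]; positivity
  have hle : ∀ ω, Sbar n ω ≤ A ω + B ω := by
    intro ω
    refine le_trans ?_ (pmax_add n _ _ (fun i => X i ω) (fun i => by simp only [Y, Z]; ring))
    rw [hSbar n hn]
    refine Finset.sup'_le _ _ (fun j hj => ?_)
    exact psum_le_pmax n j (Finset.mem_Icc.mp hj).2 (fun i => X i ω)
  have hSm : Measurable (Sbar n) := by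
    have : Sbar n = (Finset.Icc 1 n).sup' (Finset.nonempty_Icc.mpr hn)
        (fun k ω => ∑ i ∈ Finset.range k, X i ω) := by
      funext ω; rw [hSbar n hn, Finset.sup'_apply]
    rw [this]
    exact Finset.measurable_sup' _ (fun j _ => Finset.measurable_fun_sum _ (fun i _ => hmeas i))
  have hset : MeasurableSet {ω | Sbar n ω > C * r} := measurableSet_lt measurable_const hSm
  have step1 : ∫ ω in {ω | Sbar n ω > C * r}, (Sbar n ω / r) ^ 2 ∂ℙ ≤
      ∫ ω in {ω | Sbar n ω > C * r}, g ω ∂ℙ := by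
    refine integral_mono_of_nonneg (ae_of_all _ fun _ => sq_nonneg _) ig.integrableOn ?_
    refine ae_restrict_of_forall_mem hset (fun ω hω => ?_)
    have hω' : C * r < Sbar n ω := hω
    have hAn : 0 ≤ A ω := pmax_nonneg _ _
    have hBn : 0 ≤ B ω := pmax_nonneg _ _
    have hS := hle ω
    have hCr : 0 < C * r := by positivity
    simp only [g]
    rw [div_pow, hr2, div_le_iff₀ hn0]
    have eq : (8 / (C^2 * n^2) * A ω ^ 4 + 4 / n * B ω ^2) * n
      = 8 * A ω^4 / (C * r)^2 + 4 * B ω^2 := by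
      rw [mul_pow, hr2]; field_simp
    rw [eq]
    generalize Sbar n ω = s at *
    generalize A ω = a at *
    generalize B ω = b at *
    generalize C * r = c at *
    have hs2 : s^2 ≤ (a+b)^2 := pow_le_pow_left₀ (by linarith) hS 2
    rcases le_total (c/2) a with h | h
    · have : 2 * a^2 ≤ 8 * a^4 / c^2 := by
        rw [le_div_iff₀ (by positivity)]
        have : c^2 ≤ 4 * a^2 := by nlinarith
        nlinarith [mul_le_mul_of_nonneg_left this (sq_nonneg a)]
      nlinarith [sq_nonneg (a-b)]
    · have : 0 ≤ 8 * a^4 / c^2 := by positivity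
      have : s ≤ 2 * b := by linarith
      nlinarith
  have step2 : ∫ ω in {ω | Sbar n ω > C * r}, g ω ∂ℙ ≤ ∫ ω, g ω ∂ℙ :=
    setIntegral_le_integral ig (ae_of_all _ hg0)
  refine step1.trans (step2.trans ?_)
  simp only [g]
  rw [integral_add (iA.const_mul _) (iB.const_mul _), integral_const_mul, integral_const_mul]
  have t1 : 8 / (C^2 * n^2) * ∫ ω, A ω ^ 4 ∂ℙ ≤ ε / 2 := by
    have := mul_le_mul_of_nonneg_left hA (show 0 ≤ 8 / (C^2 * (n:ℝ)^2) by positivity)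
    refine this.trans ?_
    have e : 8 / (C^2 * (n:ℝ)^2) * (96 * L^4 * n^2) = K / C^2 := by
      rw [hK]; field_simp
    rw [e]
    exact final_num K ε C hK0 hε hC
  have t2 : 4 / n * ∫ ω, B ω ^ 2 ∂ℙ ≤ ε / 2 := by
    have := mul_le_mul_of_nonneg_left hB (show 0 ≤ 4 / (n:ℝ) by positivity)
    refine this.trans (le_of_eq ?_)
    field_simp; norm_num
  linarith
end
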